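/- arXiv:2510.11338 — 4 statements merged into one kernel-verified Lean document; each statement's English description precedes it below -/
import Mathlib

section
/- For every nonnegative integer n, the double sum over k and l from 0 to n of C(n,k)*C(n+k,k)*C(n,l)*C(n+l,l)*(-2)^(k+l) / C(k+l+2,k+1) equals 1/4 - (-1)^n*(2n^2+2n-1)/(8n+4). -/
open Polynomial in
theorem aux_exists_anti (q : ℚ[X]) : ∃ Q : ℚ[X], derivative Q = q := by
  induction q using Polynomial.induction_on' with
  | add p q hp hq =>
    obtain ⟨P, rfl⟩ := hp
    obtain ⟨Q, rfl⟩ := hq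
    exact ⟨P + Q, derivative_add⟩
  | monomial k a =>
    refine ⟨monomial (k+1) (a / (k+1)), ?_⟩
    rw [derivative_monomial]
    have : (k:ℚ) + 1 ≠ 0 := by positivity
    simp [this]

open Polynomial in
/-- Integral over `[0,1]` of a polynomial. -/
noncomputable def auxL (q : ℚ[X]) : ℚ :=
  (aux_exists_anti q).choose.eval 1 - (aux_exists_anti q).choose.eval 0

open Polynomial in
theorem auxL_deriv (Q : ℚ[X]) : auxL (derivative Q) = Q.eval 1 - Q.eval 0 := by
  unfold auxL
  set R := (aux_exists_anti (derivative Q)).choose with hR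
  have h : derivative R = derivative Q := (aux_exists_anti (derivative Q)).choose_spec
  have h0 : derivative (R - Q) = 0 := by simp [h]
  have h1 := derivative_eq_zero.mp h0
  obtain ⟨c, hc⟩ := natDegree_eq_zero.mp h1
  have h2 : R = Q + C c := by rw [hc]; ring
  rw [h2]; simp

open Polynomial in
theorem auxL_add (p q : ℚ[X]) : auxL (p + q) = auxL p + auxL q := by
  obtain ⟨P, rfl⟩ := aux_exists_anti p
  obtain ⟨Q, rfl⟩ := aux_exists_anti q
  rw [← derivative_add, auxL_deriv, auxL_deriv, auxL_deriv]
  simp; ring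

open Polynomial in
theorem auxL_C_mul (c : ℚ) (q : ℚ[X]) : auxL (C c * q) = c * auxL q := by
  obtain ⟨Q, rfl⟩ := aux_exists_anti q
  rw [← derivative_C_mul, auxL_deriv, auxL_deriv]
  simp; ring

open Polynomial in
theorem auxL_sum (s : Finset ℕ) (f : ℕ → ℚ[X]) : auxL (∑ i ∈ s, f i) = ∑ i ∈ s, auxL (f i) := by
  classical
  induction s using Finset.induction_on with
  | empty => simpa using auxL_deriv 0
  | insert a s ha ih => rw [Finset.sum_insert ha, Finset.sum_insert ha, auxL_add, ih]

open Polynomial in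
theorem auxL_parts (p q : ℚ[X]) : auxL (derivative p * q) =
    p.eval 1 * q.eval 1 - p.eval 0 * q.eval 0 - auxL (p * derivative q) := by
  have h := auxL_deriv (p * q)
  rw [derivative_mul, auxL_add] at h
  simp only [eval_mul] at h
  linarith

open Polynomial Nat in
theorem auxL_beta (b : ℕ) : ∀ a : ℕ, auxL (X ^ a * (1 - X) ^ b) =
    (a ! : ℚ) * b ! / (a + b + 1)! := by
  induction b with
  | zero =>
    intro a
    have h := auxL_deriv (C (1 / ((a:ℚ) + 1)) * X ^ (a + 1))
    have ha : (a:ℚ) + 1 ≠ 0 := by positivity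
    have e : derivative (C (1 / ((a:ℚ) + 1)) * X ^ (a + 1)) = X ^ a * (1 - X) ^ 0 := by
      rw [derivative_C_mul, derivative_X_pow, ← mul_assoc, ← C_mul]
      push_cast
      rw [one_div, inv_mul_cancel₀ ha]; simp
    rw [e] at h
    rw [h]
    have := Nat.factorial_ne_zero a
    simp [Nat.factorial_succ]
    field_simp
  | succ b ih =>
    intro a
    have h := auxL_parts (X ^ (a + 1)) ((1 - X) ^ (b + 1))
    have e1 : derivative (X ^ (a + 1) : ℚ[X]) * (1 - X) ^ (b + 1) =
        C ((a : ℚ) + 1) * (X ^ a * (1 - X) ^ (b + 1)) := by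
      rw [derivative_X_pow]; push_cast; simp; ring
    have e2 : (X ^ (a + 1) : ℚ[X]) * derivative ((1 - X) ^ (b + 1)) =
        C (-((b : ℚ) + 1)) * (X ^ (a + 1) * (1 - X) ^ b) := by
      rw [derivative_pow]; push_cast; simp; ring
    rw [e1, e2, auxL_C_mul, auxL_C_mul, ih] at h
    simp at h
    have ha : (a:ℚ) + 1 ≠ 0 := by positivity
    apply mul_left_cancel₀ ha
    rw [h]
    have h3 : a + 1 + b + 1 = a + (b + 1) + 1 := by ring
    rw [h3, Nat.factorial_succ a, Nat.factorial_succ b]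
    push_cast
    ring

open Polynomial Nat in
theorem aux_inv_choose (k l : ℕ) : (1 : ℚ) / ((k+l+2).choose (k+1) : ℚ) =
    (k + 1) * auxL (X ^ k * (1 - X) ^ (l + 1)) := by
  rw [auxL_beta, show k + l + 2 = (k + 1) + (l + 1) by ring, Nat.cast_add_choose,
    show k + (l + 1) + 1 = (k + 1) + (l + 1) by ring, Nat.factorial_succ k]
  push_cast
  have := Nat.factorial_ne_zero k
  have := Nat.factorial_ne_zero (l+1)
  have := Nat.factorial_ne_zero (k + 1 + (l+1))
  field_simp

open Polynomial in
/-- Rational shifted Legendre polynomial. -/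
noncomputable def auxP (n : ℕ) : ℚ[X] := (shiftedLegendre n).map (Int.castRingHom ℚ)

open Polynomial in
theorem auxP_coeff (n k : ℕ) : (auxP n).coeff k = (-1) ^ k * n.choose k * (n + k).choose n := by
  simp [auxP, coeff_shiftedLegendre]

open Polynomial in
theorem auxP_sum (n : ℕ) : auxP n = ∑ k ∈ Finset.range (n + 1),
    C ((-1 : ℚ) ^ k * n.choose k * (n + k).choose k) * X ^ k := by
  rw [auxP, shiftedLegendre, Polynomial.map_sum]
  refine Finset.sum_congr rfl fun k _ => ?_
  rw [Nat.choose_symm_add]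
  simp

open Polynomial in
theorem auxP_deg (n : ℕ) : (auxP n).natDegree ≤ n :=
  (natDegree_map_le).trans (natDegree_shiftedLegendre n).le

open Polynomial in
theorem auxP_eval_one (n : ℕ) : (auxP n).eval 1 ^ 2 = 1 := by
  have h := shiftedLegendre_eval_symm n (1 : ℚ)
  have e : ∀ x : ℚ, aeval x (shiftedLegendre n) = (auxP n).eval x := by
    intro x
    rw [auxP, eval_map, aeval_def]
    rfl
  rw [e, e, sub_self, ← coeff_zero_eq_eval_zero, auxP_coeff] at h
  rw [h]
  simp [← pow_mul, mul_comm n 2]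

open Polynomial Nat in
theorem auxP_rodrigues (n : ℕ) : C (n ! : ℚ) * auxP n = derivative^[n] (X ^ n * (1 - X) ^ n) := by
  have h := congrArg (Polynomial.map (Int.castRingHom ℚ)) (factorial_mul_shiftedLegendre_eq n)
  rw [← iterate_derivative_map] at h
  simpa [auxP] using h

open Polynomial in
theorem aux_iter_parts (n : ℕ) (w : ℚ[X]) (h0 : X ^ n ∣ w) (h1 : (1 - X) ^ n ∣ w) (q : ℚ[X]) :
    ∀ m ≤ n, auxL (derivative^[m] w * q) = (-1) ^ m * auxL (w * derivative^[m] q) := by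
  intro m
  induction m generalizing q with
  | zero => simp
  | succ m ih =>
    intro hm
    have d0 := pow_sub_dvd_iterate_derivative_of_pow_dvd m h0
    have d1 := pow_sub_dvd_iterate_derivative_of_pow_dvd m h1
    have e0 : (derivative^[m] w).eval 0 = 0 := by
      obtain ⟨r, hr⟩ := d0
      rw [hr]; simp; left; omega
    have e1 : (derivative^[m] w).eval 1 = 0 := by
      obtain ⟨r, hr⟩ := d1
      rw [hr]; simp; left; omega
    rw [Function.iterate_succ_apply', auxL_parts, e0, e1, ih _ (by omega),
      Function.iterate_succ_apply]
    ring

open Polynomial in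
theorem aux_iter_comp (p : ℚ[X]) (k : ℕ) :
    derivative^[k] (p.comp (2 - X)) = (-1) ^ k * (derivative^[k] p).comp (2 - X) := by
  induction k generalizing p with
  | zero => simp
  | succ k ih => simp [ih (derivative p), derivative_comp, pow_succ]

open Polynomial in
theorem aux_iter_X_mul (p : ℚ[X]) (k : ℕ) :
    derivative^[k] (X * derivative p) = C (k : ℚ) * derivative^[k] p
      + X * derivative^[k+1] p := by
  induction k with
  | zero => simp
  | succ k ih =>
    rw [Function.iterate_succ_apply', ih, derivative_add, derivative_C_mul, derivative_mul,
      ← Function.iterate_succ_apply' derivative k, ← Function.iterate_succ_apply' derivative (k+1)]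
    simp
    ring

open Polynomial Nat in
theorem aux_iter_U (n : ℕ) : derivative^[n] (X * auxP n) =
    C ((n ! : ℚ) * ((-1) ^ n * (2 * n).choose n)) * (C ((n : ℚ) + 1) * X - C ((n : ℚ) / 2)) := by
  have hd : (derivative^[n] (X * auxP n)).natDegree ≤ 1 := by
    refine (natDegree_iterate_derivative _ _).trans ?_
    have := natDegree_mul_le (p := X) (q := auxP n)
    have := auxP_deg n
    have : (X : ℚ[X]).natDegree = 1 := natDegree_X
    omega
  rw [eq_X_add_C_of_natDegree_le_one hd, coeff_iterate_derivative, coeff_iterate_derivative]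
  have c1 : (X * auxP n).coeff (1 + n) = (-1 : ℚ) ^ n * ((2 * n).choose n : ℚ) := by
    rw [add_comm, coeff_X_mul, auxP_coeff, two_mul]; simp
  have c0 : (X * auxP n).coeff (0 + n) = -((-1 : ℚ) ^ n * ((2 * n).choose n : ℚ) * ((n:ℚ) / 2)) := by
    rcases n with _ | m
    · simp
    · rw [zero_add, coeff_X_mul, auxP_coeff]
      have hc : (m + 1 + m).choose (m+1) * 2 = (2 * (m+1)).choose (m+1) := by
        have h1 : 2 * (m + 1) = (m + 1 + m) + 1 := by ring
        rw [h1, Nat.choose_succ_succ, Nat.choose_symm_of_eq_add (show m + 1 + m = m + (m+1) by ring)]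
        ring
      rw [← hc]
      simp
      ring
  rw [c1, c0]
  have f1 : (1 + n).descFactorial n = (n + 1) * n ! := by
    have := Nat.factorial_mul_descFactorial (show n ≤ 1 + n by omega)
    simpa [add_comm 1 n, Nat.factorial_succ] using this
  rw [f1, zero_add, Nat.descFactorial_self]
  simp only [nsmul_eq_mul, C_mul, C_neg, C_add, C_sub]
  push_cast
  simp only [C_mul, C_neg, C_add]
  ring

open Polynomial Nat in
theorem aux_moment (n : ℕ) :
    auxL (auxP n * (X * derivative ((X * auxP n).comp (2 - X)))) =
      (-1) ^ n * ((n : ℚ) ^ 2 + n - 1 / 2) / (2 * n + 1) := by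
  set h := (X * auxP n).comp (2 - X) with hh
  have hf : (n ! : ℚ) ≠ 0 := by positivity
  apply mul_left_cancel₀ hf
  rw [← auxL_C_mul, ← mul_assoc, auxP_rodrigues,
    aux_iter_parts n _ (dvd_mul_right _ _) (dvd_mul_left _ _) _ n le_rfl, aux_iter_X_mul,
    Function.iterate_succ_apply', hh, aux_iter_comp, aux_iter_U]
  set c : ℚ := (n ! : ℚ) * ((-1) ^ n * (2 * n).choose n) with hc
  have e : X ^ n * (1 - X) ^ n * (C (n : ℚ) * ((-1) ^ n * (C c * (C ((n : ℚ) + 1) * X - C ((n : ℚ) / 2))).comp (2 - X))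
      + X * derivative ((-1) ^ n * (C c * (C ((n : ℚ) + 1) * X - C ((n : ℚ) / 2))).comp (2 - X)))
      = C ((-1) ^ n * c * (n * (2 * (n + 1) - n / 2))) * (X ^ n * (1 - X) ^ n)
        + C (-((-1) ^ n * c * (n + 1) ^ 2)) * (X ^ (n + 1) * (1 - X) ^ n) := by
    have e1 : ((-1) ^ n * (C c * (C ((n : ℚ) + 1) * X - C ((n : ℚ) / 2))).comp (2 - X) : ℚ[X])
        = C ((-1) ^ n * c * (2 * (n + 1) - n / 2)) - C ((-1) ^ n * c * (n + 1)) * X := by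
      simp only [mul_comp, sub_comp, C_comp, X_comp]
      simp only [C_mul, C_sub, C_add, C_pow, C_neg, C_1, map_ofNat]
      ring
    rw [e1, derivative_sub, derivative_C, derivative_C_mul, derivative_X]
    simp only [C_mul, C_sub, C_add, C_pow, C_neg, C_1, map_ofNat]
    ring
  rw [e, auxL_add, auxL_C_mul, auxL_C_mul, auxL_beta, auxL_beta, hc]
  have hch : ((2 * n).choose n : ℚ) = (2 * n)! / (n ! * n !) := by
    rw [two_mul, Nat.cast_add_choose]
  have h1 : n + 1 + n + 1 = (2 * n + 1) + 1 := by ring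
  have h2 : n + n + 1 = 2 * n + 1 := by ring
  have hf2 : ((2 * n)! : ℚ) ≠ 0 := by positivity
  have hs : ((-1 : ℚ) ^ n) * (-1) ^ n = 1 := by rw [← mul_pow]; simp
  rw [hch, h1, h2, Nat.factorial_succ (2 * n + 1), Nat.factorial_succ (2 * n), Nat.factorial_succ n]
  push_cast
  have h3 : 2 * (n : ℚ) + 1 ≠ 0 := by positivity
  have h4 : 2 * (n : ℚ) + 1 + 1 ≠ 0 := by positivity
  generalize ((-1 : ℚ) ^ n) = s at *
  have hs2 : s ^ 2 = 1 := by rw [pow_two]; exact hs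
  field_simp
  rw [show s ^ 3 = s by rw [pow_succ, hs2, one_mul]]
  ring

open Polynomial in
theorem aux_main (U : ℚ[X]) (h0 : U.eval 0 = 0) (h1 : U.eval 1 ^ 2 = 1) :
    auxL ((derivative U).comp (C 2 * X) * (U.comp (2 - X)).comp (C 2 * X)) =
      1 / 2 - auxL (U * derivative (U.comp (2 - X))) := by
  set h := U.comp (2 - X) with hh
  obtain ⟨W, hW⟩ := aux_exists_anti (derivative U * h)
  have e1 : (derivative U).comp (C 2 * X) * h.comp (C 2 * X) =
      derivative (C (1 / 2) * W.comp (C 2 * X)) := by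
    rw [derivative_C_mul, derivative_comp, hW, mul_comp, derivative_C_mul, derivative_X, mul_one,
      ← mul_assoc, ← C_mul]
    norm_num
  have e2 : auxL (derivative (W + W.comp (2 - X))) = auxL (derivative (U * h)) := by
    congr 1
    rw [derivative_add, derivative_comp, hW, derivative_mul, mul_comp, hh, derivative_comp,
      comp_assoc]
    simp
    ring
  have e3 := auxL_parts U h
  rw [← hW, auxL_deriv] at e3
  rw [auxL_deriv, auxL_deriv] at e2
  rw [e1, auxL_deriv]
  simp [hh, h0] at e2 e3 ⊢
  norm_num at e2 e3 ⊢
  simp only [← pow_two, h1] at e2 e3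
  linarith

open Polynomial in
theorem stmt_1 (n : ℕ) :
    ∑ k ∈ Finset.range (n+1), ∑ l ∈ Finset.range (n+1),
      ((n.choose k : ℚ) * ((n+k).choose k) * (n.choose l) * ((n+l).choose l) * (-2)^(k+l))
        / (((k+l+2).choose (k+1) : ℚ))
    = 1/4 - (-1)^n * (2*(n:ℚ)^2 + 2*n - 1) / (8*(n:ℚ) + 4) := by
  have hm := aux_main (X * auxP n) (by simp) (by simpa using auxP_eval_one n)
  rw [mul_comm X (auxP n), mul_assoc, mul_comm (auxP n) X, aux_moment] at hm
  have e1 : (derivative (X * auxP n)).comp (C 2 * X) = ∑ k ∈ Finset.range (n+1),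
      C ((n.choose k : ℚ) * ((n+k).choose k) * (-2) ^ k * (k + 1)) * X ^ k := by
    rw [auxP_sum, Finset.mul_sum, derivative_sum, Polynomial.sum_comp]
    refine Finset.sum_congr rfl fun k _ => ?_
    rw [show X * (C ((-1 : ℚ) ^ k * n.choose k * (n + k).choose k) * X ^ k) =
      C ((-1 : ℚ) ^ k * n.choose k * (n + k).choose k) * X ^ (k+1) by ring,
      derivative_C_mul, derivative_X_pow, mul_comp, mul_comp, C_comp, C_comp, X_pow_comp, mul_pow,
      show (-2 : ℚ) = -1 * 2 by norm_num, mul_pow]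
    simp only [C_mul, C_pow, add_tsub_cancel_right]
    push_cast
    ring
  have e2 : ((X * auxP n).comp (2 - X)).comp (C 2 * X) = ∑ l ∈ Finset.range (n+1),
      C (2 * ((n.choose l : ℚ) * ((n+l).choose l) * (-2) ^ l)) * (1 - X) ^ (l + 1) := by
    rw [auxP_sum, Finset.mul_sum, Polynomial.sum_comp, Polynomial.sum_comp]
    refine Finset.sum_congr rfl fun k _ => ?_
    have : ((2 - X : ℚ[X]).comp (C 2 * X)) = C 2 * (1 - X) := by
      have h2 : (C 2 : ℚ[X]) = 2 := map_ofNat C 2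
      rw [h2, sub_comp, X_comp, ofNat_comp]; ring
    rw [show X * (C ((-1 : ℚ) ^ k * n.choose k * (n + k).choose k) * X ^ k) =
      C ((-1 : ℚ) ^ k * n.choose k * (n + k).choose k) * X ^ (k+1) by ring,
      comp_assoc, this, mul_comp, C_comp, X_pow_comp, mul_pow,
      show (-2 : ℚ) = -1 * 2 by norm_num, mul_pow]
    simp only [C_mul, C_pow]
    ring
  rw [e1, e2, Finset.sum_mul_sum, auxL_sum] at hm
  have e3 : ∀ k ∈ Finset.range (n+1), auxL (∑ l ∈ Finset.range (n+1),
      C ((n.choose k : ℚ) * ((n+k).choose k) * (-2) ^ k * (k + 1)) * X ^ k *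
      (C (2 * ((n.choose l : ℚ) * ((n+l).choose l) * (-2) ^ l)) * (1 - X) ^ (l + 1))) =
      2 * ∑ l ∈ Finset.range (n+1),
      ((n.choose k : ℚ) * ((n+k).choose k) * (n.choose l) * ((n+l).choose l) * (-2)^(k+l))
        / (((k+l+2).choose (k+1) : ℚ)) := by
    intro k _
    rw [auxL_sum, Finset.mul_sum]
    refine Finset.sum_congr rfl fun l _ => ?_
    rw [mul_mul_mul_comm, ← C_mul, auxL_C_mul, div_eq_mul_one_div, aux_inv_choose]
    ring
  rw [Finset.sum_congr rfl e3, ← Finset.mul_sum] at hm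
  have h3 : 2 * (n : ℚ) + 1 ≠ 0 := by positivity
  have h4 : 8 * (n : ℚ) + 4 ≠ 0 := by positivity
  have h5 : (-1)^n * (2*(n:ℚ)^2 + 2*n - 1) / (8*(n:ℚ) + 4) =
      (-1) ^ n * ((n : ℚ) ^ 2 + n - 1 / 2) / (2 * n + 1) / 2 := by
    field_simp
    ring
  rw [h5]
  linarith
end

section
/- Define t_n(x) = Σ_{k=0}^n C(n,k)*C(x,k)*C(x+k,k)*2^k. For any odd prime p and p-adic integer x with 2x ≢ −1 (mod p), one has Σ_{n=0}^{p-1} t_n(x)^2 ≡ (−1)^{⟨x⟩_p} · (p + 2(x − ⟨x⟩_p)) / (2x+1) (mod p^2). -/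
/-- Generalized binomial coefficient `C(x, k) = x(x-1)⋯(x-k+1)/k!` in `ℚ_[p]`. -/
noncomputable def gbinom {p : ℕ} [Fact p.Prime] (x : ℚ_[p]) (k : ℕ) : ℚ_[p] :=
  (∏ i ∈ Finset.range k, (x - i)) / (k.factorial : ℚ_[p])

/-- The sequence `t_n(x) = ∑_{k=0}^n C(n,k) C(x,k) C(x+k,k) 2^k`. -/
noncomputable def tseq {p : ℕ} [Fact p.Prime] (x : ℚ_[p]) (n : ℕ) : ℚ_[p] :=
  ∑ k ∈ Finset.range (n+1), (n.choose k : ℚ_[p]) * gbinom x k * gbinom (x + (k : ℚ_[p])) k * 2^k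
/-- The binomial transform. -/
def BT {R : Type*} [CommRing R] (c : ℕ → R) (n : ℕ) : R :=
  ∑ k ∈ Finset.range (n+1), (n.choose k : R) * c k

lemma BT_succ {R : Type*} [CommRing R] (c : ℕ → R) (n : ℕ) :
    BT c (n+1) = BT c n + BT (fun k => c (k+1)) n := by
  unfold BT
  rw [Finset.sum_range_succ' _ (n+1)]
  have h : ∑ k ∈ Finset.range (n+1), (n.choose k : R) * c k
      = ∑ k ∈ Finset.range (n+1), (n.choose (k+1) : R) * c (k+1) + c 0 := by
    have := Finset.sum_range_succ' (fun k => (n.choose k : R) * c k) (n+1)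
    rw [Finset.sum_range_succ] at this
    simpa using this
  rw [h]
  simp only [Nat.choose_succ_succ, Nat.cast_add, add_mul, Finset.sum_add_distrib]
  simp
  ring

lemma BT_mul {R : Type*} [CommRing R] (c : ℕ → R) (n : ℕ) :
    ((n:R)+1) * BT (fun k => c (k+1)) n = BT (fun k => (k:R) * c k) (n+1) := by
  unfold BT
  rw [Finset.sum_range_succ' _ (n+1), Finset.mul_sum]
  simp only [Nat.cast_zero, zero_mul, mul_zero, add_zero]
  refine Finset.sum_congr rfl fun k _ => ?_
  have := congrArg (Nat.cast (R := R)) (Nat.add_one_mul_choose_eq n k)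
  push_cast at this ⊢
  linear_combination c (k+1) * this

lemma BT_sum {R : Type*} [CommRing R] (c : ℕ → R) (N : ℕ) :
    ∑ n ∈ Finset.range N, BT c n = ∑ k ∈ Finset.range N, (N.choose (k+1) : R) * c k := by
  induction N with
  | zero => simp
  | succ N ih =>
    rw [Finset.sum_range_succ, ih, BT, Finset.sum_range_succ _ N, Finset.sum_range_succ _ N,
      ← add_assoc, ← Finset.sum_add_distrib]
    simp only [Nat.choose_succ_succ, Nat.cast_add, add_mul, Finset.sum_add_distrib]
    simp
    ring

section alg
variable {R : Type*} [CommRing R] [IsDomain R] [CharZero R]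

lemma key_rel (b b' : ℕ → R) (y : R) (h0 : b 0 = 1) (h0' : b' 0 = 1)
    (h : ∀ k : ℕ, ((k:R)+1)^2 * b (k+1) = (y^2 - y - k*(k+1)) * b k)
    (h' : ∀ k : ℕ, ((k:R)+1)^2 * b' (k+1) = (y^2 + y - k*(k+1)) * b' k) (k : ℕ) :
    (k:R) * (b' k + b k) = y * (b' k - b k) := by
  induction k with
  | zero => simp [h0, h0']
  | succ k ih =>
    have hk : ((k:R)+1)^2 ≠ 0 := pow_ne_zero _ (by exact_mod_cast Nat.succ_ne_zero k)
    apply mul_left_cancel₀ hk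
    push_cast
    linear_combination ((k:R)+1-y) * h' k + ((k:R)+1+y) * h k + (y^2-((k:R)+1)^2) * ih

lemma key_rel2 (b b' : ℕ → R) (y : R) (h0 : b 0 = 1) (h0' : b' 0 = 1)
    (h : ∀ k : ℕ, ((k:R)+1)^2 * b (k+1) = (y^2 - y - k*(k+1)) * b k)
    (h' : ∀ k : ℕ, ((k:R)+1)^2 * b' (k+1) = (y^2 + y - k*(k+1)) * b' k) (k : ℕ) :
    ((k:R)+1) * (b' (k+1) - b (k+1)) + k * (b' k - b k) = y * (b' k + b k) := by
  have ih := key_rel b b' y h0 h0' h h' k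
  have hk : ((k:R)+1) ≠ 0 := by exact_mod_cast Nat.succ_ne_zero k
  apply mul_left_cancel₀ hk
  linear_combination h' k - h k - y * ih

lemma tele (b b' : ℕ → R) (y : R) (h0 : b 0 = 1) (h0' : b' 0 = 1)
    (h : ∀ k : ℕ, ((k:R)+1)^2 * b (k+1) = (y^2 - y - k*(k+1)) * b k)
    (h' : ∀ k : ℕ, ((k:R)+1)^2 * b' (k+1) = (y^2 + y - k*(k+1)) * b' k) :
    ∃ S D : ℕ → R, ∀ N : ℕ,
      4 * y * ∑ n ∈ Finset.range (N+1), ((2*y-1) * (BT (fun k => b k * 2^k) n)^2 +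
        (2*y+1) * (BT (fun k => b' k * 2^k) n)^2) =
      ((N:R)+1)^2 * (4 * S N * (S (N+1) - S N) - (D (N+1) - D N)^2) := by
  set s : ℕ → R := fun k => (b' k + b k) * 2^k with hs
  set d : ℕ → R := fun k => (b' k - b k) * 2^k with hd
  have k1 : (fun k : ℕ => (k:R) * s k) = fun k => y * d k := by
    funext k
    simp only [hs, hd]
    linear_combination 2^k * key_rel b b' y h0 h0' h h' k
  have mulBT : ∀ (a : R) (c : ℕ → R) n, BT (fun k => a * c k) n = a * BT c n := by
    intro a c n
    simp only [BT, Finset.mul_sum]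
    exact Finset.sum_congr rfl fun k _ => by ring
  have addBT : ∀ (c e : ℕ → R) n, BT (fun k => c k + e k) n = BT c n + BT e n := by
    intro c e n
    simp only [BT, mul_add, Finset.sum_add_distrib]
  have R1 : ∀ n : ℕ, y * BT d (n+1) = ((n:R)+1) * (BT s (n+1) - BT s n) := by
    intro n
    rw [← mulBT, ← k1, ← BT_mul, BT_succ]
    ring
  have R0 : ∀ n : ℕ, ((n:R)+1) * (BT d (n+1) - BT d n) = BT (fun k => (k:R) * d k) (n+1) := by
    intro n
    rw [← BT_mul, BT_succ]
    ring
  have R2' : ∀ n : ℕ, BT (fun k => (k:R) * d k) (n+1) + BT (fun k => (k:R) * d k) n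
      = 2 * y * BT s n := by
    intro n
    rw [BT_succ, ← mulBT, ← addBT, ← addBT]
    congr 1
    funext k
    simp only [hs, hd]
    push_cast
    linear_combination 2 * 2^k * key_rel2 b b' y h0 h0' h h' k
  have R2 : ∀ n : ℕ, ((n:R)+1+1) * (BT d (n+1+1) - BT d (n+1)) + ((n:R)+1) * (BT d (n+1) - BT d n)
      = 2 * y * BT s (n+1) := by
    intro n
    have := R0 (n+1)
    push_cast at this
    rw [this, R0, R2']
  have hS : ∀ n, BT s n = BT (fun k => b' k * 2^k) n + BT (fun k => b k * 2^k) n := by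
    intro n
    rw [← addBT]; congr 1; funext k; simp only [hs]; ring
  have hD : ∀ n, BT d n = BT (fun k => b' k * 2^k) n - BT (fun k => b k * 2^k) n := by
    intro n
    have : BT (fun k => d k + b k * 2^k) n = BT (fun k => b' k * 2^k) n := by
      congr 1; funext k; simp only [hd]; ring
    rw [← this, addBT]; ring
  refine ⟨BT s, BT d, fun N => ?_⟩
  have hF : ∀ n, 4 * y * ((2*y-1) * (BT (fun k => b k * 2^k) n)^2 +
        (2*y+1) * (BT (fun k => b' k * 2^k) n)^2) =
        4 * y * (y * (BT s n ^2 + BT d n^2) + BT s n * BT d n) := by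
    intro n
    rw [hS, hD]; ring
  rw [Finset.mul_sum, Finset.sum_congr rfl fun n _ => hF n]
  induction N with
  | zero =>
    have e0 : BT d 0 = 0 := by simp [BT, hd, h0, h0']
    have e1 := R1 0
    have e2 := R0 0
    have e3 := R2' 0
    have e4 : BT (fun k => (k:R) * d k) 0 = 0 := by simp [BT]
    rw [← e2, e4] at e3
    simp only [Nat.cast_zero, zero_add] at *
    rw [Finset.sum_range_one]
    rw [e0] at e3 ⊢
    have e5 : BT d 1 = 2 * y * BT s 0 := by linear_combination e3
    rw [e5] at e1 ⊢
    linear_combination 4 * BT s 0 * e1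
  | succ N ih =>
    rw [Finset.sum_range_succ, ih]
    have a1 := R1 N
    have a2 := R1 (N+1)
    have a3 := R2 N
    push_cast at *
    generalize BT s (N+1+1) = s2 at *
    generalize BT s (N+1) = s1 at *
    generalize BT s N = s0 at *
    generalize BT d (N+1+1) = d2 at *
    generalize BT d (N+1) = d1 at *
    generalize BT d N = d0 at *
    generalize (N:R) = ν at *
    linear_combination 4*(ν+2)*s1*a2 + (-4*(ν+1)*s0+4*y*d1)*a1 + ((ν+2)*(d2-d1) - (ν+1)*(d1-d0) - 2*y*s1)*a3
end alg

section padic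
variable {p : ℕ} [hpp : Fact p.Prime]

lemma gbinom_norm (z : ℤ_[p]) (k : ℕ) : ‖gbinom (z : ℚ_[p]) k‖ ≤ 1 := by
  unfold gbinom
  have h := PadicInt.norm_ascPochhammer_le k (z - (k : ℤ_[p]) + 1)
  have e : ((∏ i ∈ Finset.range k, (z - (i : ℤ_[p]))) : ℤ_[p]) = (ascPochhammer ℤ_[p] k).eval (z - (k : ℤ_[p]) + 1) := by
    rw [← descPochhammer_eval_eq_ascPochhammer, descPochhammer_eval_eq_prod_range]
  have e2 : (∏ i ∈ Finset.range k, ((z : ℚ_[p]) - i))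
      = (((∏ i ∈ Finset.range k, (z - (i : ℤ_[p]))) : ℤ_[p]) : ℚ_[p]) := by
    have := map_prod (PadicInt.Coe.ringHom (p := p)) (fun i : ℕ => z - (i : ℤ_[p])) (Finset.range k)
    refine Eq.trans ?_ this.symm
    refine Finset.prod_congr rfl fun i _ => ?_
    change _ = ((z - (i : ℤ_[p]) : ℤ_[p]) : ℚ_[p])
    push_cast
    rfl
  rw [e2, e, norm_div]
  apply div_le_one_of_le₀ _ (norm_nonneg _)
  rw [PadicInt.norm_def, PadicInt.norm_def, PadicInt.coe_natCast] at h
  exact h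

lemma gbinom_succ (x : ℚ_[p]) (k : ℕ) : ((k : ℚ_[p]) + 1) * gbinom x (k+1) = (x - k) * gbinom x k := by
  unfold gbinom
  have h1 : ((k : ℚ_[p]) + 1) ≠ 0 := by exact_mod_cast Nat.succ_ne_zero k
  have h2 : (k.factorial : ℚ_[p]) ≠ 0 := by exact_mod_cast k.factorial_ne_zero
  rw [Finset.prod_range_succ, Nat.factorial_succ]
  push_cast
  field_simp

lemma gbinom_succ' (x : ℚ_[p]) (k : ℕ) :
    ((k : ℚ_[p]) + 1) * gbinom (x + 1) (k+1) = (x + 1) * gbinom x k := by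
  unfold gbinom
  have h1 : ((k : ℚ_[p]) + 1) ≠ 0 := by exact_mod_cast Nat.succ_ne_zero k
  have h2 : (k.factorial : ℚ_[p]) ≠ 0 := by exact_mod_cast k.factorial_ne_zero
  rw [Finset.prod_range_succ', Nat.factorial_succ]
  push_cast
  have : ∀ i ∈ Finset.range k, (x + 1 - ((i : ℚ_[p]) + 1)) = x - i := fun i _ => by ring
  rw [Finset.prod_congr rfl this]
  field_simp
  ring

lemma exists_gbinom (z : ℤ_[p]) (k : ℕ) : ∃ g : ℤ_[p], (g : ℚ_[p]) = gbinom (z : ℚ_[p]) k :=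
  ⟨⟨gbinom (z : ℚ_[p]) k, gbinom_norm z k⟩, rfl⟩

/-- The integral coefficients `C(z,k) C(z+k,k)`. -/
noncomputable def bet (z : ℤ_[p]) (k : ℕ) : ℤ_[p] :=
  (exists_gbinom z k).choose * (exists_gbinom (z + (k : ℤ_[p])) k).choose

lemma bet_coe (z : ℤ_[p]) (k : ℕ) :
    ((bet z k : ℤ_[p]) : ℚ_[p]) = gbinom (z : ℚ_[p]) k * gbinom ((z : ℚ_[p]) + (k : ℚ_[p])) k := by
  unfold bet
  rw [PadicInt.coe_mul, (exists_gbinom z k).choose_spec,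
    (exists_gbinom (z + (k : ℤ_[p])) k).choose_spec, PadicInt.coe_add, PadicInt.coe_natCast]

lemma bet_zero (z : ℤ_[p]) : bet z 0 = 1 := by
  apply PadicInt.ext
  rw [bet_coe]
  simp [gbinom]

lemma bet_succ (z : ℤ_[p]) (k : ℕ) :
    ((k : ℤ_[p]) + 1)^2 * bet z (k+1) = (z^2 + z - k*(k+1)) * bet z k := by
  apply PadicInt.ext
  push_cast [bet_coe]
  have h1 := gbinom_succ (z : ℚ_[p]) k
  have h2 := gbinom_succ' ((z : ℚ_[p]) + (k : ℚ_[p])) k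
  rw [add_assoc] at h2
  linear_combination ((k : ℚ_[p]) + 1) * gbinom ((z : ℚ_[p]) + (k + 1)) (k+1) * h1
    + ((z : ℚ_[p]) - k) * gbinom (z : ℚ_[p]) k * h2

/-- The integral version of `tseq`. -/
noncomputable def tau (z : ℤ_[p]) (n : ℕ) : ℤ_[p] := BT (fun k => bet z k * 2^k) n

lemma tau_coe (z : ℤ_[p]) (n : ℕ) : ((tau z n : ℤ_[p]) : ℚ_[p]) = tseq (z : ℚ_[p]) n := by
  unfold tau BT tseq
  rw [PadicInt.coe_sum]
  refine Finset.sum_congr rfl fun k _ => ?_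
  push_cast [bet_coe]
  have : ((2 : ℤ_[p]) : ℚ_[p]) = 2 := by norm_cast
  rw [this]
  ring

/-- `(2z+1) ∑ t_n(z)^2`. -/
noncomputable def gsum (z : ℤ_[p]) : ℤ_[p] := (2*z+1) * ∑ n ∈ Finset.range p, tau z n ^ 2

lemma nat_unit {k : ℕ} (h0 : 0 < k) (hk : k < p) : IsUnit (k : ℤ_[p]) := by
  rw [PadicInt.isUnit_iff]
  by_contra h
  have h1 : ‖(k : ℤ_[p])‖ < 1 := lt_of_le_of_ne (PadicInt.norm_le_one _) h
  have h2 : ‖((k : ℤ) : ℤ_[p])‖ < 1 := by simpa using h1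
  rw [PadicInt.norm_int_lt_one_iff_dvd] at h2
  exact absurd (Nat.le_of_dvd h0 (Int.natCast_dvd_natCast.mp h2)) (by omega)

lemma unit_of_not_dvd {z : ℤ_[p]} (h : ¬ (p : ℤ_[p]) ∣ z) : IsUnit z := by
  by_contra h'
  rw [PadicInt.not_isUnit_iff, PadicInt.norm_lt_one_iff_dvd] at h'
  exact h h'

lemma step (hp : p ≠ 2) (z : ℤ_[p]) (hz : IsUnit (z + 1)) :
    (p : ℤ_[p])^2 ∣ gsum (z + 1) + gsum z := by
  obtain ⟨S, D, h⟩ := tele (bet z) (bet (z+1)) (z+1) (bet_zero z) (bet_zero _)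
    (fun k => by rw [bet_succ]; ring) (fun k => by rw [bet_succ])
  have hp2 := hpp.out.two_le
  have h2 : IsUnit (2 : ℤ_[p]) := by
    have := nat_unit (p := p) (k := 2) (by norm_num) (by omega)
    exact_mod_cast this
  have h4 : IsUnit (4 * (z+1)) := by
    have : (4 : ℤ_[p]) = 2 * 2 := by norm_num
    rw [this]
    exact (h2.mul h2).mul hz
  rw [← h4.dvd_mul_left]
  have := h (p-1)
  have e : p - 1 + 1 = p := by omega
  have e' : ((p - 1 : ℕ) : ℤ_[p]) + 1 = p := by exact_mod_cast congrArg (Nat.cast (R := ℤ_[p])) e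
  rw [e, e', Finset.sum_add_distrib, ← Finset.mul_sum, ← Finset.mul_sum] at this
  refine ⟨_, Eq.trans ?_ this⟩
  unfold gsum tau
  ring

lemma bet_small (z : ℤ_[p]) (hz : (p : ℤ_[p]) ∣ z) (k : ℕ) (hk : k + 1 < p) :
    (p : ℤ_[p])^2 ∣ ((k : ℤ_[p]) + 1) * bet z (k+1) - (-1)^k * z := by
  induction k with
  | zero =>
    have := bet_succ z 0
    simp [bet_zero] at this
    simp [this]
    exact hz
  | succ k ih =>
    have ih := ih (by omega)
    have hu : IsUnit ((k : ℤ_[p]) + 1) := by exact_mod_cast nat_unit (p := p) (k := k+1) (by omega) (by omega)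
    have hu2 : IsUnit ((k : ℤ_[p]) + 1 + 1) := by exact_mod_cast nat_unit (p := p) (k := k+1+1) (by omega) (by omega)
    have hb : (p : ℤ_[p]) ∣ bet z (k+1) := by
      rw [← hu.dvd_mul_left]
      have h1 : (p : ℤ_[p]) ∣ ((k : ℤ_[p]) + 1) * bet z (k+1) - (-1)^k * z :=
        (dvd_pow_self _ two_ne_zero).trans ih
      exact (dvd_sub_left (hz.mul_left _)).mp h1
    rw [← hu2.dvd_mul_left]
    have h2 := bet_succ z (k+1)
    have h3 : (p : ℤ_[p])^2 ∣ z * bet z (k+1) := by rw [pow_two]; exact mul_dvd_mul hz hb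
    push_cast at h2 ⊢
    have : ((k : ℤ_[p]) + 1 + 1) * (((k : ℤ_[p]) + 1 + 1) * bet z (k + 1 + 1) - (-1)^(k+1) * z)
      = (z+1) * (z * bet z (k+1))
        - ((k : ℤ_[p]) + 1 + 1) * (((k : ℤ_[p]) + 1) * bet z (k+1) - (-1)^k * z) := by
      rw [pow_succ]
      linear_combination h2
    rw [this]
    exact dvd_sub (h3.mul_left _) (ih.mul_left _)

lemma bet_dvd (z : ℤ_[p]) (hz : (p : ℤ_[p]) ∣ z) (k : ℕ) (hk : k + 1 < p) :
    (p : ℤ_[p]) ∣ bet z (k+1) := by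
  have hu : IsUnit ((k : ℤ_[p]) + 1) := by exact_mod_cast nat_unit (p := p) (k := k+1) (by omega) (by omega)
  rw [← hu.dvd_mul_left]
  have h1 : (p : ℤ_[p]) ∣ ((k : ℤ_[p]) + 1) * bet z (k+1) - (-1)^k * z :=
    (dvd_pow_self _ two_ne_zero).trans (bet_small z hz k hk)
  exact (dvd_sub_left (hz.mul_left _)).mp h1

lemma tau_dvd (z : ℤ_[p]) (hz : (p : ℤ_[p]) ∣ z) (n : ℕ) (hn : n < p) :
    (p : ℤ_[p]) ∣ tau z n - 1 := by
  unfold tau BT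
  rw [Finset.sum_range_succ']
  simp only [bet_zero, Nat.choose_zero_right, Nat.cast_one, pow_zero, mul_one, add_sub_cancel_right]
  refine Finset.dvd_sum fun k hk => ?_
  rw [Finset.mem_range] at hk
  exact ((bet_dvd z hz k (by omega)).mul_right _).mul_left _

lemma base (hp : p ≠ 2) (z : ℤ_[p]) (hz : (p : ℤ_[p]) ∣ z) :
    (p : ℤ_[p])^2 ∣ gsum z - (p + 2*z) := by
  have hp2 := hpp.out.two_le
  -- square to linear
  have h1 : (p : ℤ_[p])^2 ∣ ∑ n ∈ Finset.range p, tau z n ^ 2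
      - (2 * ∑ n ∈ Finset.range p, tau z n - p) := by
    have : ∑ n ∈ Finset.range p, tau z n ^ 2 - (2 * ∑ n ∈ Finset.range p, tau z n - p)
      = ∑ n ∈ Finset.range p, (tau z n - 1)^2 := by
      have : ∀ n ∈ Finset.range p, (tau z n - 1)^2 = tau z n ^ 2 - (2 * tau z n - 1) :=
        fun n _ => by ring
      rw [Finset.sum_congr rfl this, Finset.sum_sub_distrib, Finset.sum_sub_distrib, Finset.mul_sum]
      simp
    rw [this]
    refine Finset.dvd_sum fun n hn => pow_dvd_pow_of_dvd (tau_dvd z hz n (Finset.mem_range.mp hn)) 2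
  obtain ⟨q, hq⟩ : ∃ q, p = q + 2 := ⟨p - 2, by omega⟩
  have hodd : Odd p := hpp.out.odd_of_ne_two hp
  have hqodd : Odd q := by
    rw [hq] at hodd
    rcases Nat.even_or_odd q with h | h
    · exact absurd hodd (by simpa [Nat.not_odd_iff_even] using h.add even_two)
    · exact h
  -- the linear sum
  have h2 : (p : ℤ_[p])^2 ∣ ∑ n ∈ Finset.range p, tau z n - (p + bet z (q+1) * 2^(q+1)) := by
    unfold tau
    rw [BT_sum]
    have e : Finset.range p = Finset.range (q+1+1) := by rw [hq]
    rw [e, Finset.sum_range_succ, Finset.sum_range_succ']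
    have e2 : p.choose (q+1+1) = 1 := by rw [hq]; simp
    rw [e2]
    simp only [bet_zero, zero_add, Nat.choose_one_right, Nat.cast_one, pow_zero, mul_one, one_mul]
    have e3 : ∀ A B C : ℤ_[p], A + B + C - (B + C) = A := fun A B C => by ring
    rw [e3]
    refine Finset.dvd_sum fun k hk => ?_
    rw [Finset.mem_range] at hk
    have c1 : (p : ℤ_[p]) ∣ (p.choose (k+1+1) : ℤ_[p]) :=
      Nat.cast_dvd_cast (hpp.out.dvd_choose_self (by omega) (by omega))
    rw [pow_two]
    exact mul_dvd_mul c1 ((bet_dvd z hz k (by omega)).mul_right _)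
  have hpq : (p : ℤ_[p]) = q + 2 := by
    have := congrArg (Nat.cast (R := ℤ_[p])) hq
    push_cast at this
    exact this
  -- the coefficient at p-1
  have h3 : (p : ℤ_[p])^2 ∣ bet z (q+1) - z := by
    have a := bet_small z hz q (by omega)
    rw [hqodd.neg_one_pow] at a
    have b : (p : ℤ_[p])^2 ∣ (p : ℤ_[p]) * bet z (q+1) := by
      rw [pow_two]; exact mul_dvd_mul_left _ (bet_dvd z hz q (by omega))
    have e : bet z (q+1) - z = p * bet z (q+1) - (((q : ℤ_[p]) + 1) * bet z (q+1) - -1 * z) := by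
      rw [hpq]; ring
    rw [e]
    exact dvd_sub b a
  have h4 : (p : ℤ_[p]) ∣ 2^(q+1) - 1 := by
    have hc : IsCoprime (2 : ℤ) p := by
      have : Nat.Coprime 2 p := (Nat.coprime_primes Nat.prime_two hpp.out).mpr (Ne.symm hp)
      exact_mod_cast Nat.isCoprime_iff_coprime.mpr this
    have := Int.ModEq.pow_card_sub_one_eq_one hpp.out hc
    have e : p - 1 = q + 1 := by omega
    rw [e] at this
    have d := this.symm.dvd
    have := (Int.cast_dvd_cast (α := ℤ_[p]) _ _ d)
    push_cast at this
    exact this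
  have h5 : (p : ℤ_[p])^2 ∣ z * (2^(q+1) - 1) := by
    rw [pow_two]; exact mul_dvd_mul hz h4
  have h6 : (p : ℤ_[p])^2 ∣ z * (p + 2 * z) := by
    rw [pow_two]; exact mul_dvd_mul hz (dvd_add dvd_rfl (hz.mul_left _))
  obtain ⟨a1, h1⟩ := h1
  obtain ⟨a2, h2⟩ := h2
  obtain ⟨a3, h3⟩ := h3
  obtain ⟨a5, h5⟩ := h5
  obtain ⟨a6, h6⟩ := h6
  unfold gsum
  refine ⟨(2*z+1)*a1 + 2*(2*z+1)*a2 + 2*(2*z+1)*2^(q+1)*a3 + 2*(2*z+1)*a5 + 2*a6, ?_⟩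
  linear_combination (2*z+1)*h1 + 2*(2*z+1)*h2 + 2*(2*z+1)*2^(q+1)*h3 + 2*(2*z+1)*h5 + 2*h6

lemma main_int (hp : p ≠ 2) (z : ℤ_[p]) (hz : (p : ℤ_[p]) ∣ z) (m : ℕ) (hm : m < p) :
    (p : ℤ_[p])^2 ∣ gsum (z + (m : ℤ_[p])) - (-1)^m * ((p : ℤ_[p]) + 2*z) := by
  induction m with
  | zero => simpa using base hp z hz
  | succ m ih =>
    have ih := ih (by omega)
    have hu : IsUnit (z + (m : ℤ_[p]) + 1) := by
      apply unit_of_not_dvd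
      intro h
      have h' : (p : ℤ_[p]) ∣ ((m + 1 : ℕ) : ℤ_[p]) := by
        rw [add_assoc] at h
        push_cast
        exact (dvd_add_right hz).mp h
      have := isUnit_of_dvd_unit h' (nat_unit (by omega) hm)
      exact PadicInt.prime_p.not_isUnit this
    have := dvd_sub (step hp (z + (m : ℤ_[p])) hu) ih
    push_cast
    rw [← add_assoc]
    convert this using 1
    ring
end padic

theorem stmt_13 (p : ℕ) [Fact p.Prime] (hp : p ≠ 2) (x : ℚ_[p]) (hx : ‖x‖ ≤ 1)
    (m : ℕ) (hm : m < p) (hxm : ‖x - m‖ ≤ (p : ℝ)⁻¹)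
    (h2x : ¬ ‖2*x + 1‖ ≤ (p : ℝ)⁻¹) :
    ‖(∑ n ∈ Finset.range p, (tseq x n)^2) -
        (-1)^m * ((p : ℚ_[p]) + 2*(x - m)) / (2*x + 1)‖ ≤ (p : ℝ) ^ (-2 : ℤ) := by
  obtain ⟨X, rfl⟩ : ∃ X : ℤ_[p], (X : ℚ_[p]) = x := ⟨⟨x, hx⟩, rfl⟩
  have c2 : ((2 : ℤ_[p]) : ℚ_[p]) = 2 := by norm_cast
  have hz : (p : ℤ_[p]) ∣ X - m := by
    have := (PadicInt.norm_le_pow_iff_mem_span_pow (X - (m : ℤ_[p])) 1).mp (by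
      rw [PadicInt.norm_def]; push_cast; simpa using hxm)
    rwa [Ideal.mem_span_singleton, pow_one] at this
  have hu : IsUnit (2 * X + 1) := by
    apply unit_of_not_dvd
    intro h
    apply h2x
    have := (PadicInt.norm_le_pow_iff_mem_span_pow (2 * X + 1) 1).mpr (by
      rw [Ideal.mem_span_singleton, pow_one]; exact h)
    rw [PadicInt.norm_def] at this
    push_cast at this
    rw [c2] at this
    simpa using this
  have h := main_int hp (X - (m : ℤ_[p])) hz m hm
  rw [sub_add_cancel] at h
  have h' := (PadicInt.norm_le_pow_iff_mem_span_pow _ 2).mpr (Ideal.mem_span_singleton.mpr h)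
  have hn : ‖2 * (X : ℚ_[p]) + 1‖ = 1 := by
    have := PadicInt.isUnit_iff.mp hu
    rw [PadicInt.norm_def] at this
    push_cast at this
    rwa [c2] at this
  have hne : 2 * (X : ℚ_[p]) + 1 ≠ 0 := by
    intro h0; rw [h0] at hn; simp at hn
  rw [PadicInt.norm_def] at h'
  unfold gsum at h'
  push_cast [PadicInt.coe_sum, PadicInt.coe_pow, tau_coe] at h'
  simp only [c2] at h'
  have e : (∑ n ∈ Finset.range p, (tseq (X : ℚ_[p]) n)^2) -
        (-1)^m * ((p : ℚ_[p]) + 2*(X - m)) / (2*X + 1)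
      = ((2 * (X : ℚ_[p]) + 1) * (∑ n ∈ Finset.range p, (tseq (X : ℚ_[p]) n)^2) -
        (-1)^m * ((p : ℚ_[p]) + 2*(X - m))) / (2*X + 1) := by
    field_simp
  rw [e, norm_div, hn, div_one]
  exact_mod_cast h'
end

section
/- Define t_n(x) = Σ_{k=0}^n C(n,k)*C(x,k)*C(x+k,k)*2^k. For any odd prime p and p-adic integer x with 2x ≡ −1 (mod p), one has Σ_{n=0}^{p-1} t_n(x)^2 ≡ (−1/p) (mod p^2), where (−1/p) is the Legendre symbol, i.e. (−1)^((p−1)/2). -/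
open Polynomial in
lemma beta_int (l : ℕ) : ∀ k : ℕ, ∫ v in (0:ℝ)..1, v ^ k * (1 - v) ^ l =
    (k.factorial * l.factorial : ℝ) / ((k + l + 1).factorial : ℝ) := by
  induction l with
  | zero =>
    intro k
    simp only [pow_zero, mul_one, integral_pow, Nat.factorial_zero, add_zero, Nat.factorial_succ]
    have := Nat.cast_ne_zero (R := ℝ) |>.2 (Nat.factorial_ne_zero k)
    push_cast
    field_simp
    simp
  | succ l ih =>
    intro k
    have h : ∀ v : ℝ, v ^ k * (1 - v) ^ (l+1) = v ^ k * (1 - v) ^ l - v ^ (k+1) * (1 - v) ^ l := by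
      intro v; ring
    simp only [h]
    rw [intervalIntegral.integral_sub (Continuous.intervalIntegrable (by fun_prop) _ _)
      (Continuous.intervalIntegrable (by fun_prop) _ _), ih, ih]
    have e1 : k + 1 + l + 1 = (k + l + 1) + 1 := by ring
    have e2 : k + (l + 1) + 1 = (k + l + 1) + 1 := by ring
    have := Nat.cast_ne_zero (R := ℝ) |>.2 (Nat.factorial_ne_zero (k + l + 1))
    have h3 : ((k:ℝ) + l + 1 + 1) ≠ 0 := by positivity
    rw [e1, e2, Nat.factorial_succ (k+l+1), Nat.factorial_succ k, Nat.factorial_succ l]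
    push_cast
    field_simp
    ring

open Polynomial in
lemma parts_int (F : ℝ[X]) (m : ℕ) (h0 : ∀ j < m, (derivative^[j] F).eval 0 = 0)
    (h1 : ∀ j < m, (derivative^[j] F).eval 1 = 0) : ∀ j ≤ m, ∀ g : ℝ[X],
    ∫ u in (0:ℝ)..1, (derivative^[j] F).eval u * g.eval u =
      (-1) ^ j * ∫ u in (0:ℝ)..1, F.eval u * (derivative^[j] g).eval u := by
  intro j
  induction j with
  | zero => intro _ g; simp
  | succ j ih =>
    intro hj g
    have hp := intervalIntegral.integral_deriv_mul_eq_sub (a := 0) (b := 1)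
      (u := fun u => (derivative^[j] F).eval u) (v := fun u => g.eval u)
      (u' := fun u => (derivative^[j+1] F).eval u) (v' := fun u => (derivative g).eval u)
      (fun x _ => by
        rw [Function.iterate_succ_apply']
        exact Polynomial.hasDerivAt _ _) (fun x _ => Polynomial.hasDerivAt _ _)
      (Continuous.intervalIntegrable (by fun_prop) _ _)
      (Continuous.intervalIntegrable (by fun_prop) _ _)
    rw [intervalIntegral.integral_add (Continuous.intervalIntegrable (by fun_prop) _ _)
      (Continuous.intervalIntegrable (by fun_prop) _ _), h0 j (by omega), h1 j (by omega),
      ih (by omega) (derivative g)] at hp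
    rw [Function.iterate_succ_apply (f := derivative) (x := g), pow_succ]
    linarith

open Polynomial in
lemma ortho (m : ℕ) (g : ℝ[X]) (hg : g.natDegree ≤ m) :
    ∫ u in (0:ℝ)..1, (aeval u (shiftedLegendre m)) * g.eval u =
      (-1) ^ m * g.coeff m * ((m.factorial * m.factorial : ℝ) / ((m + m + 1).factorial : ℝ)) := by
  set F : ℝ[X] := X ^ m * (1 - X) ^ m with hF
  have hR : ∀ u : ℝ, (m.factorial : ℝ) * aeval u (shiftedLegendre m) =
      (derivative^[m] F).eval u := by
    intro u
    have h := congrArg (fun q : ℤ[X] => aeval u q) (factorial_mul_shiftedLegendre_eq m)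
    simp only [map_mul, map_natCast] at h
    rw [h, aeval_def, ← eval_map, ← Polynomial.iterate_derivative_map]
    simp [hF]
  have hd : ∀ (j : ℕ), j < m → ∀ r : ℝ, (X - C r) ^ m ∣ F → (derivative^[j] F).eval r = 0 := by
    intro j hj r hr
    have h2 := Polynomial.pow_sub_dvd_iterate_derivative_of_pow_dvd j hr
    exact dvd_iff_isRoot.1 ((dvd_pow_self _ (by omega)).trans h2)
  have hdg : derivative^[m] g = C ((m.factorial : ℝ) * g.coeff m) := by
    ext n
    rw [coeff_iterate_derivative, coeff_C]
    rcases Nat.eq_zero_or_pos n with rfl | hn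
    · simp [Nat.descFactorial_self]
    · rw [coeff_eq_zero_of_natDegree_lt (by omega), if_neg (by omega), smul_zero]
  have hp := parts_int F m (fun j hj => hd j hj 0 (by simp [hF]))
    (fun j hj => hd j hj 1 (by
      have : (1 - X : ℝ[X]) ^ m = (-1) ^ m * (X - C 1) ^ m := by
        rw [← mul_pow]; simp
      rw [hF, this, ← mul_assoc]; exact dvd_mul_left _ _)) m le_rfl g
  have hf : (m.factorial : ℝ) ≠ 0 := Nat.cast_ne_zero.2 (Nat.factorial_ne_zero m)
  simp only [← hR, hdg, eval_C, mul_assoc] at hp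
  rw [intervalIntegral.integral_const_mul, intervalIntegral.integral_mul_const] at hp
  have hb := beta_int m m
  have : ∀ v : ℝ, F.eval v = v ^ m * (1 - v) ^ m := by intro v; simp [hF]
  simp only [this, hb] at hp
  apply mul_left_cancel₀ hf
  rw [hp]; ring

/-- explicit identity -/
lemma key_real (m : ℕ) : ∑ k ∈ Finset.range (m+1), ∑ l ∈ Finset.range (m+1),
    ((m.choose k * (m+k).choose k * 2 ^ k : ℝ)) * ((m.choose l * (m+l).choose l * 2 ^ l : ℝ)) *
    ((-1) ^ (k + l) * (k.factorial * l.factorial : ℝ) / ((k + l + 1).factorial : ℝ)) =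
    (-1) ^ m / (2 * m + 1) := by
  set R : ℝ → ℝ := fun u => Polynomial.aeval u (Polynomial.shiftedLegendre m) with hR
  have hRs : ∀ u, R u = ∑ k ∈ Finset.range (m+1), (-1) ^ k * m.choose k * (m+k).choose k * u ^ k := by
    intro u
    simp only [hR, Polynomial.shiftedLegendre, map_sum, map_mul, map_pow, Polynomial.aeval_X,
      Polynomial.aeval_C]
    refine Finset.sum_congr rfl fun k _ => ?_
    rw [Nat.choose_symm_add]
    simp
  have hRc : Continuous R := by
    have : R = fun u : ℝ => ∑ k ∈ Finset.range (m+1), (-1 : ℝ) ^ k * m.choose k * (m+k).choose k * u ^ k :=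
      funext hRs
    rw [this]; fun_prop
  have hsymm : ∀ u, R u = (-1) ^ m * R (1 - u) := fun u => Polynomial.shiftedLegendre_eval_symm m u
  have h1 : ∫ v in (0:ℝ)..1, R (2 * v) * R (2 - 2 * v) = ∑ k ∈ Finset.range (m+1), ∑ l ∈ Finset.range (m+1),
    ((m.choose k * (m+k).choose k * 2 ^ k : ℝ)) * ((m.choose l * (m+l).choose l * 2 ^ l : ℝ)) *
    ((-1) ^ (k + l) * (k.factorial * l.factorial : ℝ) / ((k + l + 1).factorial : ℝ)) := by
    have : ∀ v : ℝ, R (2 * v) * R (2 - 2 * v) = ∑ k ∈ Finset.range (m+1), ∑ l ∈ Finset.range (m+1),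
      (((m.choose k * (m+k).choose k * 2 ^ k : ℝ)) * ((m.choose l * (m+l).choose l * 2 ^ l : ℝ)) *
      (-1) ^ (k + l)) * (v ^ k * (1 - v) ^ l) := by
      intro v
      rw [hRs, hRs, Finset.sum_mul_sum]
      refine Finset.sum_congr rfl fun k _ => Finset.sum_congr rfl fun l _ => ?_
      rw [show 2 - 2 * v = 2 * (1 - v) by ring, mul_pow, mul_pow, pow_add]
      ring
    simp only [this]
    rw [intervalIntegral.integral_finsetSum
      (fun i _ => Continuous.intervalIntegrable (by fun_prop) _ _)]
    refine Finset.sum_congr rfl fun k _ => ?_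
    rw [intervalIntegral.integral_finsetSum
      (fun i _ => Continuous.intervalIntegrable (by fun_prop) _ _)]
    refine Finset.sum_congr rfl fun l _ => ?_
    rw [intervalIntegral.integral_const_mul, beta_int]
    ring
  have hsq : ((-1 : ℝ) ^ m) * (-1) ^ m = 1 := by rw [← mul_pow]; simp
  have h2 : ∫ v in (0:ℝ)..1, R (2 * v) * R (2 - 2 * v) = ∫ u in (0:ℝ)..1, R u * R (-u) := by
    have e : ∀ v, R (2 * v) * R (2 - 2 * v) = (fun u => R u * R (-u)) (2 * v - 1) := by
      intro v
      have a := hsymm (2 * v)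
      have b := hsymm (2 - 2 * v)
      rw [a, b]
      simp only
      rw [show (1 - 2 * v) = - (2 * v - 1) by ring, show 1 - (2 - 2 * v) = 2 * v - 1 by ring]
      linear_combination (R (-(2*v-1)) * R (2*v-1)) * hsq
    simp only [e]
    rw [intervalIntegral.integral_comp_mul_sub (fun u => R u * R (-u)) (by norm_num) 1]
    have hi : ∀ a b, IntervalIntegrable (fun u => R u * R (-u)) MeasureTheory.volume a b :=
      fun a b => Continuous.intervalIntegrable (by fun_prop) _ _
    norm_num
    rw [← intervalIntegral.integral_add_adjacent_intervals (hi (-1) 0) (hi 0 1)]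
    have := intervalIntegral.integral_comp_neg (a := 0) (b := 1) (fun u => R u * R (-u))
    simp only [neg_neg, neg_zero] at this
    rw [← this]
    simp only [mul_comm (R (-_))]
    ring
  have h3 : ∫ u in (0:ℝ)..1, R u * R (-u) = (-1) ^ m / (2 * m + 1) := by
    set g : Polynomial ℝ := ∑ k ∈ Finset.range (m+1),
      Polynomial.C ((m.choose k * (m+k).choose k : ℝ)) * Polynomial.X ^ k with hg
    have hgR : ∀ u, R (-u) = g.eval u := by
      intro u
      rw [hRs, hg, Polynomial.eval_finsetSum]
      refine Finset.sum_congr rfl fun k _ => ?_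
      have : ((-1:ℝ) ^ k) * (-1) ^ k = 1 := by rw [← mul_pow]; simp
      simp [neg_pow u]
      linear_combination ((m.choose k * (m+k).choose k : ℝ) * u ^ k) * this
    have hdeg : g.natDegree ≤ m := by
      refine Polynomial.natDegree_sum_le_of_forall_le _ _ fun k hk => ?_
      refine (Polynomial.natDegree_C_mul_X_pow_le _ _).trans ?_
      have := Finset.mem_range.1 hk
      omega
    have hco : g.coeff m = (m + m).choose m := by
      simp only [hg, Polynomial.finsetSum_coeff, Polynomial.coeff_C_mul, Polynomial.coeff_X_pow]
      simp
    simp only [hgR]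
    rw [ortho m g hdeg, hco, Nat.cast_add_choose, Nat.factorial_succ]
    have hf : (m.factorial : ℝ) ≠ 0 := Nat.cast_ne_zero.2 (Nat.factorial_ne_zero m)
    have hf2 : ((m+m).factorial : ℝ) ≠ 0 := Nat.cast_ne_zero.2 (Nat.factorial_ne_zero _)
    push_cast
    have : (m:ℝ) + m + 1 ≠ 0 := by positivity
    have : 2 * (m:ℝ) + 1 ≠ 0 := by positivity
    field_simp
    ring
  rw [← h1, h2, h3]

lemma key_field (K : Type*) [Field K] [CharZero K] (m : ℕ) :
    ∑ k ∈ Finset.range (m+1), ∑ l ∈ Finset.range (m+1),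
    ((m.choose k * (m+k).choose k * 2 ^ k : K)) * ((m.choose l * (m+l).choose l * 2 ^ l : K)) *
    ((-1) ^ (k + l) * (k.factorial * l.factorial : K) / ((k + l + 1).factorial : K)) =
    (-1) ^ m / (2 * m + 1) := by
  have hq : ∑ k ∈ Finset.range (m+1), ∑ l ∈ Finset.range (m+1),
    ((m.choose k * (m+k).choose k * 2 ^ k : ℚ)) * ((m.choose l * (m+l).choose l * 2 ^ l : ℚ)) *
    ((-1) ^ (k + l) * (k.factorial * l.factorial : ℚ) / ((k + l + 1).factorial : ℚ)) =
    (-1) ^ m / (2 * m + 1) := by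
    have := key_real m
    exact_mod_cast this
  have := congrArg (fun q : ℚ => (q : K)) hq
  push_cast at this
  exact this

set_option linter.unusedSectionVars false

section padic
variable {p : ℕ} [Fact p.Prime]

lemma np2 : ((p:ℝ)⁻¹) * (p:ℝ)⁻¹ = (p:ℝ) ^ (-2 : ℤ) := by
  rw [zpow_neg, ← mul_inv]; congr 1; norm_cast; ring

lemma cadd {a b : ℚ_[p]} {r : ℝ} (ha : ‖a‖ ≤ r) (hb : ‖b‖ ≤ r) : ‖a + b‖ ≤ r :=
  (Padic.nonarchimedean a b).trans (max_le ha hb)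

lemma csub {a b : ℚ_[p]} {r : ℝ} (ha : ‖a‖ ≤ r) (hb : ‖b‖ ≤ r) : ‖a - b‖ ≤ r := by
  rw [sub_eq_add_neg]; exact cadd ha (by rwa [norm_neg])

lemma csum {ι : Type*} (s : Finset ι) (f : ι → ℚ_[p]) {r : ℝ} (hr : 0 ≤ r)
    (h : ∀ i ∈ s, ‖f i‖ ≤ r) : ‖∑ i ∈ s, f i‖ ≤ r := by
  classical
  induction s using Finset.induction_on with
  | empty => simpa using hr
  | insert a s ha ih =>
    rw [Finset.sum_insert ha]
    exact cadd (h a (Finset.mem_insert_self _ _))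
      (ih fun i hi => h i (Finset.mem_insert_of_mem hi))

lemma cmul {a b : ℚ_[p]} {r : ℝ} (ha : ‖a‖ ≤ 1) (hb : ‖b‖ ≤ r) : ‖a * b‖ ≤ r := by
  rw [norm_mul]
  calc ‖a‖ * ‖b‖ ≤ 1 * r := mul_le_mul ha hb (norm_nonneg _) zero_le_one
    _ = r := one_mul r

lemma cprod (k : ℕ) (f g : ℕ → ℚ_[p]) {r : ℝ} (hr : 0 ≤ r) (hf : ∀ i, ‖f i‖ ≤ 1)
    (hg : ∀ i, ‖g i‖ ≤ 1) (h : ∀ i, ‖f i - g i‖ ≤ r) :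
    ‖∏ i ∈ Finset.range k, f i - ∏ i ∈ Finset.range k, g i‖ ≤ r := by
  induction k with
  | zero => simpa using hr
  | succ k ih =>
    rw [Finset.prod_range_succ, Finset.prod_range_succ]
    have hF : ‖∏ i ∈ Finset.range k, f i‖ ≤ 1 := by
      rw [norm_prod]; exact Finset.prod_le_one (fun _ _ => norm_nonneg _) (fun i _ => hf i)
    have : (∏ i ∈ Finset.range k, f i) * f k - (∏ i ∈ Finset.range k, g i) * g k =
      (∏ i ∈ Finset.range k, f i) * (f k - g k) +
      g k * (∏ i ∈ Finset.range k, f i - ∏ i ∈ Finset.range k, g i) := by ring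
    rw [this]
    exact cadd (cmul hF (h k)) (cmul (hg k) ih)

lemma nnat (n : ℕ) : ‖(n : ℚ_[p])‖ ≤ 1 := by
  simpa using Padic.norm_int_le_one (p := p) (n : ℤ)

lemma nunit {n : ℕ} (h : ¬ p ∣ n) : ‖(n : ℚ_[p])‖ = 1 := by
  refine le_antisymm (nnat n) ?_
  by_contra hlt
  push Not at hlt
  have := (Padic.norm_intCast_lt_one_iff (p := p) (k := (n : ℤ))).1 (by simpa using hlt)
  exact h (by exact_mod_cast this)

lemma nfact {k : ℕ} (h : k < p) : ‖(k.factorial : ℚ_[p])‖ = 1 := by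
  apply nunit
  rw [(Fact.out : p.Prime).dvd_factorial]; omega

lemma ndvd {n : ℤ} (h : (p:ℤ) ∣ n) : ‖(n : ℚ_[p])‖ ≤ (p:ℝ)⁻¹ := by
  obtain ⟨c, rfl⟩ := h
  push_cast
  rw [norm_mul, Padic.norm_p]
  have : ‖(c : ℚ_[p])‖ ≤ 1 := Padic.norm_int_le_one c
  exact mul_le_of_le_one_right (by positivity) this

lemma gb_prod (x : ℚ_[p]) (k : ℕ) : gbinom x k * gbinom (x + (k : ℚ_[p])) k =
    (∏ i ∈ Finset.range k, (x * x + x - i * (i + 1))) / ((k.factorial : ℚ_[p]) * k.factorial) := by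
  unfold gbinom
  rw [div_mul_div_comm]
  congr 1
  rw [← Finset.prod_range_reflect (fun i => x + (k : ℚ_[p]) - i) k, ← Finset.prod_mul_distrib]
  refine Finset.prod_congr rfl fun i hi => ?_
  have := Finset.mem_range.1 hi
  have e : ((k - 1 - i : ℕ) : ℚ_[p]) = k - 1 - i := by
    rw [Nat.sub_sub, Nat.cast_sub (by omega)]; push_cast; ring
  rw [e]; ring

lemma gb_nat (m k : ℕ) : gbinom (m : ℚ_[p]) k = m.choose k := by
  unfold gbinom
  rw [← descPochhammer_eval_eq_prod_range, descPochhammer_eval_eq_descFactorial,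
    Nat.descFactorial_eq_factorial_mul_choose]
  have := Nat.cast_ne_zero (R := ℚ_[p]) |>.2 (Nat.factorial_ne_zero k)
  push_cast
  field_simp

lemma gb_cong (hp : p ≠ 2) (x : ℚ_[p]) (hx : ‖x‖ ≤ 1) (h2x : ‖2*x + 1‖ ≤ (p : ℝ)⁻¹)
    (m : ℕ) (hm : p = 2 * m + 1) (k : ℕ) (hk : k < p) :
    ‖gbinom x k * gbinom (x + (k : ℚ_[p])) k - (m.choose k * (m + k).choose k : ℚ_[p])‖
      ≤ (p:ℝ) ^ (-2 : ℤ) := by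
  rw [← gb_nat, ← gb_nat, Nat.cast_add, gb_prod, gb_prod, ← sub_div, norm_div, norm_mul, nfact hk,
    mul_one, div_one]
  have hnm : ‖(m : ℚ_[p])‖ ≤ 1 := nnat m
  have hq : ∀ y : ℚ_[p], ‖y‖ ≤ 1 → ∀ i : ℕ, ‖y * y + y - i * (i + 1)‖ ≤ 1 := fun y hy i =>
    csub (cadd (cmul hy hy) hy) (cmul (nnat i) (by exact_mod_cast nnat (i+1)))
  refine cprod k _ _ (by positivity) (hq x hx) (hq _ hnm) fun i => ?_
  have h4 : ‖((4 : ℕ) : ℚ_[p])‖ = 1 := by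
    apply nunit
    intro h
    have h' : p ∣ 2 ^ 2 := by simpa using h
    have := (Nat.prime_dvd_prime_iff_eq Fact.out Nat.prime_two).1 ((Fact.out : p.Prime).dvd_of_dvd_pow h')
    exact hp this
  have e : ((4 : ℕ) : ℚ_[p]) * (x * x + x - i * (i + 1) - (m * m + m - i * (i + 1))) =
      (2 * x + 1) * (2 * x + 1) - p * p := by
    have : (p : ℚ_[p]) = 2 * m + 1 := by exact_mod_cast congrArg (Nat.cast (R := ℚ_[p])) hm
    rw [this]; push_cast; ring
  have h5 := congrArg norm e
  rw [norm_mul, h4, one_mul] at h5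
  rw [h5, ← np2]
  refine csub ?_ ?_
  · rw [norm_mul]; exact mul_le_mul h2x h2x (norm_nonneg _) (by positivity)
  · rw [norm_mul, Padic.norm_p]

lemma choose_pred (k : ℕ) (hk : k < p) : (p : ℤ) ∣ ((p-1).choose k : ℤ) - (-1) ^ k := by
  induction k with
  | zero => simp
  | succ k ih =>
    have h1 := ih (by omega)
    have h2 : (p : ℤ) ∣ (p.choose (k+1) : ℤ) := by
      exact_mod_cast (Fact.out : p.Prime).dvd_choose_self (by omega) hk
    have h3 : p.choose (k+1) = (p-1).choose k + (p-1).choose (k+1) := by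
      conv_lhs => rw [show p = (p - 1) + 1 by omega]
      exact Nat.choose_succ_succ _ _
    have : ((p-1).choose (k+1) : ℤ) - (-1) ^ (k+1) =
        (p.choose (k+1) : ℤ) - (((p-1).choose k : ℤ) - (-1) ^ k) := by
      rw [h3]; push_cast; ring
    rw [this]; exact dvd_sub h2 h1

lemma choose_p_cong (hp : p ≠ 2) (k : ℕ) (hk : k < p) :
    ‖((p.choose (k+1) : ℕ) : ℚ_[p]) - p * ((-1) ^ k / (k + 1))‖ ≤ (p:ℝ) ^ (-2 : ℤ) := by
  have hk1 : ((k : ℚ_[p]) + 1) ≠ 0 := by exact_mod_cast Nat.succ_ne_zero k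
  have h := Nat.add_one_mul_choose_eq (p-1) k
  rw [show p - 1 + 1 = p by omega] at h
  have h' : (p : ℚ_[p]) * (p-1).choose k = p.choose (k+1) * (k + 1) := by exact_mod_cast h
  have e : ((p.choose (k+1) : ℕ) : ℚ_[p]) - p * ((-1) ^ k / (k + 1)) =
      p * ((((p-1).choose k : ℤ) - (-1) ^ k : ℤ) : ℚ_[p]) / (k + 1) := by
    field_simp
    push_cast
    rw [mul_comm, ] at h'
    linear_combination -h'
  rw [e]
  rcases Nat.lt_or_ge (k+1) p with h1 | h1
  · have hu : ‖((k : ℚ_[p]) + 1)‖ = 1 := by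
      have := nunit (p := p) (n := k+1) (fun hd => by have := Nat.le_of_dvd (by omega) hd; omega)
      exact_mod_cast this
    rw [norm_div, hu, div_one, norm_mul, Padic.norm_p, ← np2]
    exact mul_le_mul_of_nonneg_left (ndvd (choose_pred k hk)) (by positivity)
  · have hkp : k = p - 1 := by omega
    have hev : Even k := by
      have := (Fact.out : p.Prime).eq_two_or_odd'.resolve_left hp
      obtain ⟨r, hr⟩ := this
      exact ⟨r, by omega⟩
    have : (((p-1).choose k : ℤ) - (-1) ^ k : ℤ) = 0 := by
      rw [hev.neg_one_pow, hkp]; simp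
    rw [this]; simp

lemma S_cong (hp : p ≠ 2) (l : ℕ) : ∀ k, k + l < p →
    ‖(∑ n ∈ Finset.range p, (n.choose k * n.choose l : ℚ_[p])) -
      p * ((-1) ^ (k + l) * (k.factorial * l.factorial) / ((k + l + 1).factorial))‖
      ≤ (p:ℝ) ^ (-2 : ℤ) := by
  induction l with
  | zero =>
    intro k hk
    have h1 : ∑ n ∈ Finset.range p, (n.choose k * n.choose 0 : ℚ_[p]) = p.choose (k+1) := by
      have : ∀ N : ℕ, ∑ n ∈ Finset.range N, (n.choose k * n.choose 0 : ℚ_[p]) = N.choose (k+1) := by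
        intro N
        induction N with
        | zero => simp
        | succ N ihN =>
          rw [Finset.sum_range_succ, ihN, Nat.choose_succ_succ]
          push_cast; simp; ring
      exact this p
    rw [h1]
    convert choose_p_cong hp k (by omega) using 4
    have := Nat.cast_ne_zero (R := ℚ_[p]) |>.2 (Nat.factorial_ne_zero k)
    have hk1 : ((k : ℚ_[p]) + 1) ≠ 0 := by exact_mod_cast Nat.succ_ne_zero k
    rw [add_zero, Nat.factorial_succ]
    push_cast
    field_simp
    simp
  | succ l ih =>
    intro k hk
    have hS : ∀ N : ℕ, ∑ n ∈ Finset.range N, (n.choose k * n.choose (l+1) : ℚ_[p]) =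
      (N.choose (k+1)) * N.choose (l+1) - ∑ n ∈ Finset.range N, (n.choose (k+1) * n.choose l : ℚ_[p])
      - ∑ n ∈ Finset.range N, (n.choose k * n.choose l : ℚ_[p]) := by
      intro N
      induction N with
      | zero => simp
      | succ N ihN =>
        rw [Finset.sum_range_succ, Finset.sum_range_succ, Finset.sum_range_succ, ihN,
          Nat.choose_succ_succ, Nat.choose_succ_succ]
        push_cast; ring
    have hd : ∀ j, j + 1 < p → ‖((p.choose (j+1) : ℕ) : ℚ_[p])‖ ≤ (p:ℝ)⁻¹ := by
      intro j hj
      have h2 : (p : ℤ) ∣ (p.choose (j+1) : ℤ) := by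
        exact_mod_cast (Fact.out : p.Prime).dvd_choose_self (by omega) hj
      exact_mod_cast ndvd h2
    have hcc : ‖((p.choose (k+1) : ℕ) : ℚ_[p]) * (p.choose (l+1) : ℕ)‖ ≤ (p:ℝ) ^ (-2 : ℤ) := by
      rw [norm_mul, ← np2]
      exact mul_le_mul (hd k (by omega)) (hd l (by omega)) (norm_nonneg _) (by positivity)
    have i1 := ih (k+1) (by omega)
    have i2 := ih k (by omega)
    convert csub (csub hcc i1) i2 using 2
    rw [hS]
    have e1 : k + 1 + l + 1 = (k + l + 1) + 1 := by ring
    have e2 : k + (l + 1) + 1 = (k + l + 1) + 1 := by ring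
    have := Nat.cast_ne_zero (R := ℚ_[p]) |>.2 (Nat.factorial_ne_zero (k + l + 1))
    have h3 : ((k:ℚ_[p]) + l + 1 + 1) ≠ 0 := by exact_mod_cast Nat.succ_ne_zero (k+l+1)
    rw [e1, e2, Nat.factorial_succ (k+l+1), Nat.factorial_succ k, Nat.factorial_succ l]
    push_cast
    field_simp
    ring

end padic

theorem stmt_14 (p : ℕ) [Fact p.Prime] (hp : p ≠ 2) (x : ℚ_[p]) (hx : ‖x‖ ≤ 1)
    (h2x : ‖2*x + 1‖ ≤ (p : ℝ)⁻¹) :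
    ‖(∑ n ∈ Finset.range p, (tseq x n)^2) - (-1)^((p-1)/2)‖ ≤ (p : ℝ) ^ (-2 : ℤ) := by
  obtain ⟨m, hm⟩ := (Fact.out : p.Prime).odd_of_ne_two hp
  set b : ℕ → ℚ_[p] := fun k => (m.choose k * (m + k).choose k * 2 ^ k : ℚ_[p]) with hb
  have hbn : ∀ k, ‖b k‖ ≤ 1 := fun k => by
    have := nnat (p := p) (m.choose k * (m + k).choose k * 2 ^ k)
    push_cast at this
    exact this
  set T : ℕ → ℚ_[p] := fun n => ∑ k ∈ Finset.range (m+1), b k * n.choose k with hT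
  have hTn : ∀ n, ‖T n‖ ≤ 1 := fun n =>
    csum _ _ zero_le_one fun k _ => cmul (hbn k) (nnat _)
  have hr1 : (p:ℝ) ^ (-2 : ℤ) ≤ 1 := by
    have : (1:ℝ) ≤ p := by exact_mod_cast (Fact.out : p.Prime).one_le
    exact zpow_le_one_of_nonpos₀ this (by norm_num)
  have htT : ∀ n ∈ Finset.range p, ‖tseq x n - T n‖ ≤ (p:ℝ) ^ (-2 : ℤ) := by
    intro n hn
    have hn' := Finset.mem_range.1 hn
    have e : T n = ∑ k ∈ Finset.range (n+1), b k * n.choose k := by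
      have h1 : T n = ∑ k ∈ Finset.range (max m n+1), b k * n.choose k := by
        refine Finset.sum_subset (Finset.range_mono (by omega)) fun k _ hk => ?_
        have : m < k := by simpa using hk
        simp [hb, Nat.choose_eq_zero_of_lt this]
      rw [h1]
      refine (Finset.sum_subset (Finset.range_mono (by omega)) fun k _ hk => ?_).symm
      have : n < k := by simpa using hk
      simp [Nat.choose_eq_zero_of_lt this]
    rw [e, tseq, ← Finset.sum_sub_distrib]
    refine csum _ _ (by positivity) fun k hk => ?_
    have hk' := Finset.mem_range.1 hk
    have e2 : (n.choose k : ℚ_[p]) * gbinom x k * gbinom (x + (k : ℚ_[p])) k * 2^k - b k * n.choose k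
      = ((n.choose k * 2 ^ k : ℕ) : ℚ_[p]) * (gbinom x k * gbinom (x + (k : ℚ_[p])) k -
        (m.choose k * (m + k).choose k : ℚ_[p])) := by
      simp only [hb]; push_cast; ring
    rw [e2]
    exact cmul (nnat _) (gb_cong hp x hx h2x m hm k (by omega))
  have hm2 : (p - 1) / 2 = m := by omega
  have hpm : (p : ℚ_[p]) = 2 * m + 1 := by exact_mod_cast congrArg (Nat.cast (R := ℚ_[p])) hm
  have hp0 : (p : ℚ_[p]) ≠ 0 := by exact_mod_cast (Fact.out : p.Prime).ne_zero
  have hkey := key_field ℚ_[p] m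
  rw [← hpm] at hkey
  have hA : ‖∑ n ∈ Finset.range p, (tseq x n)^2 - ∑ n ∈ Finset.range p, (T n)^2‖ ≤ (p:ℝ) ^ (-2 : ℤ) := by
    rw [← Finset.sum_sub_distrib]
    refine csum _ _ (by positivity) fun n hn => ?_
    have h := htT n hn
    have e : tseq x n ^ 2 - T n ^ 2 = ((tseq x n - T n) + (T n + T n)) * (tseq x n - T n) := by ring
    rw [e]
    exact cmul (cadd (h.trans hr1) (cadd (hTn n) (hTn n))) h
  have hB : ∑ n ∈ Finset.range p, (T n)^2 = ∑ k ∈ Finset.range (m+1), ∑ l ∈ Finset.range (m+1),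
      b k * b l * ∑ n ∈ Finset.range p, (n.choose k * n.choose l : ℚ_[p]) := by
    simp only [hT, pow_two, Finset.sum_mul_sum]
    simp only [Finset.mul_sum]
    rw [Finset.sum_comm]
    refine Finset.sum_congr rfl fun k _ => ?_
    rw [Finset.sum_comm]
    refine Finset.sum_congr rfl fun l _ => Finset.sum_congr rfl fun n _ => ?_
    ring
  have hC : ‖∑ n ∈ Finset.range p, (T n)^2 - (-1) ^ m‖ ≤ (p:ℝ) ^ (-2 : ℤ) := by
    have : ((-1) ^ m : ℚ_[p]) = p * ((-1) ^ m / p) := by field_simp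
    rw [this, ← hkey, hB, Finset.mul_sum, ← Finset.sum_sub_distrib]
    refine csum _ _ (by positivity) fun k hk => ?_
    rw [Finset.mul_sum, ← Finset.sum_sub_distrib]
    refine csum _ _ (by positivity) fun l hl => ?_
    have hk' := Finset.mem_range.1 hk
    have hl' := Finset.mem_range.1 hl
    have hs := S_cong hp l k (by omega)
    convert cmul (cmul (hbn k) (hbn l)) hs using 2
    simp only [hb]
    ring
  rw [hm2]
  convert cadd hA hC using 2
  ring
end

section
/- Define t_n(x) = Σ_{k=0}^n C(n,k)*C(x,k)*C(x+k,k)*2^k. For any odd prime p and p-adic integer x with 2x ≢ −1 (mod p), Σ_{n=0}^{p-1} (n+1)·t_n(x)^2 ≡ p/4 − (−1)^{⟨x⟩_p}·(2x^2+2x−1)·(p + 2(x − ⟨x⟩_p)) / (8x+4) (mod p^2). -/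
theorem tele1 {R : Type*} [CommRing R] (n c s d v s1 d1 v1 : R) (h1 : v1 + v = 2*c*s)
    (h2 : (n+1)*(d1-d) = v1) (h3 : (n+1)*(s1-s) = c*d1) :
    (4*c*((n+1)*s1*d1 - c*d1^2) - v1^2) - (4*c*(n*s*d - c*d^2) - v^2)
      = 4*c*(c*s^2+s*d+c*d^2) := by
  grind

theorem tele2 {R : Type*} [CommRing R] (n c s d v s1 d1 v1 : R) (h1 : v1 + v = 2*c*s)
    (h2 : (n+1)*(d1-d) = v1) (h3 : (n+1)*(s1-s) = c*d1) :
    (4*c*(c*(n+1)^2*s1^2 - 2*(n+1)^2*s1*d1 + c*(n+1)^2*d1^2 - 2*c^2*(n+1)*s1*d1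
        + c*(c^2+1)*(n+1)*d1^2 + (n+1)*s1*v1 - c*(n+1)*d1*v1 + c^3*d1^2 - c^3*d1*v1) + v1^2)
    - (4*c*(c*n^2*s^2 - 2*n^2*s*d + c*n^2*d^2 - 2*c^2*n*s*d
        + c*(c^2+1)*n*d^2 + n*s*v - c*n*d*v + c^3*d^2 - c^3*d*v) + v^2)
    = 8*c*(c^2-1)*(2*n+c^2+1)*(s*d) := by
  grind

/-- Binomial transform. -/
def bt {R : Type*} [CommRing R] (f : ℕ → R) (n : ℕ) : R :=
  ∑ k ∈ Finset.range (n+1), (n.choose k : R) * f k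

section bt
variable {R : Type*} [CommRing R]

theorem bt_zero (f : ℕ → R) : bt f 0 = f 0 := by simp [bt]

theorem bt_ext (f : ℕ → R) (n N : ℕ) (h : n < N) :
    bt f n = ∑ k ∈ Finset.range N, (n.choose k : R) * f k := by
  unfold bt
  refine Finset.sum_subset (by intro k; simp; omega) ?_
  intro k _ hk
  rw [Nat.choose_eq_zero_of_lt (by simpa using hk)]; simp

theorem bt_succ (f : ℕ → R) (n : ℕ) : bt f (n+1) = bt f n + bt (fun k => f (k+1)) n := by
  rw [bt_ext f (n+1) (n+2) (by omega), bt_ext f n (n+2) (by omega), Finset.sum_range_succ',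
    Finset.sum_range_succ' (n := n+1)]
  simp only [Nat.choose_succ_succ, Nat.cast_add, add_mul, Finset.sum_add_distrib, bt]
  simp
  ring

theorem bt_diff (f : ℕ → R) (n : ℕ) :
    ((n:R)+1) * (bt f (n+1) - bt f n) = bt (fun k => (k:R) * f k) (n+1) := by
  rw [bt_succ, add_sub_cancel_left]
  unfold bt
  rw [Finset.sum_range_succ' _ (n+1), Finset.mul_sum]
  simp only [Nat.cast_zero, zero_mul, mul_zero, add_zero]
  refine Finset.sum_congr rfl fun k _ => ?_
  have := congrArg (Nat.cast : ℕ → R) (Nat.add_one_mul_choose_eq n k)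
  push_cast at this ⊢
  linear_combination f (k+1) * this

theorem bt_add (f g : ℕ → R) (n : ℕ) : bt (fun k => f k + g k) n = bt f n + bt g n := by
  simp [bt, mul_add, Finset.sum_add_distrib]
theorem bt_sub (f g : ℕ → R) (n : ℕ) : bt (fun k => f k - g k) n = bt f n - bt g n := by
  simp [bt, mul_sub, Finset.sum_sub_distrib]
theorem bt_smul (c : R) (f : ℕ → R) (n : ℕ) : bt (fun k => c * f k) n = c * bt f n := by
  simp only [bt, Finset.mul_sum]
  exact Finset.sum_congr rfl fun k _ => by ring

theorem sum_tele (F f : ℕ → R) (h0 : F 0 = 0) (h : ∀ n, F (n+1) - F n = f n) (N : ℕ) :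
    ∑ n ∈ Finset.range N, f n = F N := by
  induction N with
  | zero => simp [h0]
  | succ N ih => rw [Finset.sum_range_succ, ih, ← h]; ring

/-- `J`-sum. -/
def JJ (p : ℕ) (A : ℕ → R) : R := ∑ n ∈ Finset.range p, (bt A n)^2
/-- `S`-sum. -/
def SS (p : ℕ) (A : ℕ → R) : R := ∑ n ∈ Finset.range p, ((n:R)+1) * (bt A n)^2

theorem step_s15 (p : ℕ) (hp : 0 < p) (hP : (p:R)^2 = 0) (c : R) (hc : IsUnit c) (A B : ℕ → R)
    (h0 : A 0 = B 0)
    (hA : ∀ k : ℕ, (c - k) * B k = (c + k) * A k)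
    (hD : ∀ k : ℕ, ((k:R)+1) * (B (k+1) - A (k+1)) = 4 * (c + k) * A k) :
    4*c*((2*c+1) * JJ p B + (2*c-1) * JJ p A) = 0 ∧
    8*c*(c^2-1)*(2*(SS p B - SS p A) + (c^2-1) * (JJ p B - JJ p A)) = 0 := by
  set s : ℕ → R := bt (fun k => B k + A k) with hs
  set d : ℕ → R := bt (fun k => B k - A k) with hd
  set v : ℕ → R := bt (fun k => (k:R) * (B k - A k)) with hv
  have h2 : ∀ n : ℕ, ((n:R)+1) * (d (n+1) - d n) = v (n+1) := fun n => bt_diff _ n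
  have h3 : ∀ n : ℕ, ((n:R)+1) * (s (n+1) - s n) = c * d (n+1) := fun n => by
    rw [hs, bt_diff, hd, ← bt_smul]
    congr 1; funext k
    linear_combination -hA k
  have h1 : ∀ n : ℕ, v (n+1) + v n = 2 * c * s n := fun n => by
    rw [hv, bt_succ, hs, ← bt_smul, ← bt_add, ← bt_add]
    congr 1; funext k
    push_cast
    linear_combination hD k - 2 * hA k
  have d0 : d 0 = 0 := by simp [hd, bt_zero, h0]
  have v0 : v 0 = 0 := by simp [hv, bt_zero]
  have hsn : ∀ n, s n = bt B n + bt A n := fun n => bt_add _ _ n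
  have hdn : ∀ n, d n = bt B n - bt A n := fun n => bt_sub _ _ n
  obtain ⟨q, rfl⟩ : ∃ q, p = q+1 := ⟨p-1, by omega⟩
  obtain ⟨c', hc'⟩ := hc.exists_left_inv
  have hdp : ∃ w, d (q+1) = ((q+1:ℕ):R) * w := by
    refine ⟨c' * (s (q+1) - s q), ?_⟩
    push_cast
    linear_combination (-c') * h3 q - d (q+1) * hc'
  have hvp : ∃ w, v (q+1) = ((q+1:ℕ):R) * w := ⟨d (q+1) - d q, by rw [← h2]; push_cast; ring⟩
  obtain ⟨w1, hw1⟩ := hdp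
  obtain ⟨w2, hw2⟩ := hvp
  constructor
  · have := sum_tele (fun n : ℕ => 4*c*((n:R) * s n * d n - c*(d n)^2) - (v n)^2)
      (fun n => 4*c*(c*(s n)^2+s n*d n+c*(d n)^2)) (by simp [d0, v0])
      (fun n => by
        have := tele1 (n:R) c (s n) (d n) (v n) _ _ _ (h1 n) (h2 n) (h3 n)
        push_cast
        exact this) (q+1)
    simp only [hw1, hw2] at this
    rw [← Finset.mul_sum] at this
    have e : (2*c+1) * JJ (q+1) B + (2*c-1) * JJ (q+1) A
        = ∑ n ∈ Finset.range (q+1), (c*(s n)^2+s n*d n+c*(d n)^2) := by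
      unfold JJ
      rw [Finset.mul_sum, Finset.mul_sum, ← Finset.sum_add_distrib]
      refine Finset.sum_congr rfl fun n _ => ?_
      rw [hsn, hdn]; ring
    rw [e, this]
    linear_combination (4*c*(s (q+1) * w1 - c * w1^2) - w2^2) * hP
  · have := sum_tele (fun n : ℕ => 4*c*(c*(n:R)^2*(s n)^2 - 2*(n:R)^2*(s n)*(d n) + c*(n:R)^2*(d n)^2
        - 2*c^2*(n:R)*(s n)*(d n)
        + c*(c^2+1)*(n:R)*(d n)^2 + (n:R)*(s n)*(v n) - c*(n:R)*(d n)*(v n) + c^3*(d n)^2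
        - c^3*(d n)*(v n)) + (v n)^2)
      (fun n => 8*c*(c^2-1)*(2*(n:R)+c^2+1)*(s n*d n)) (by simp [d0, v0])
      (fun n => by
        have := tele2 (n:R) c (s n) (d n) (v n) _ _ _ (h1 n) (h2 n) (h3 n)
        push_cast
        exact this) (q+1)
    simp only [hw1, hw2] at this
    have e : 8*c*(c^2-1)*(2*(SS (q+1) B - SS (q+1) A) + (c^2-1) * (JJ (q+1) B - JJ (q+1) A))
        = ∑ n ∈ Finset.range (q+1), 8*c*(c^2-1)*(2*(n:R)+c^2+1)*(s n*d n) := by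
      unfold JJ SS
      rw [← Finset.sum_sub_distrib, ← Finset.sum_sub_distrib, Finset.mul_sum, Finset.mul_sum,
        ← Finset.sum_add_distrib, Finset.mul_sum]
      refine Finset.sum_congr rfl fun n _ => ?_
      rw [hsn, hdn]; ring
    rw [e, this]
    generalize ((q+1:ℕ):R) = P at *
    generalize s (q+1) = σ
    linear_combination (4*c*(c*σ^2 - 2*P*σ*w1 + c*P^2*w1^2
        - 2*c^2*σ*w1
        + c*(c^2+1)*P*w1^2 + σ*w2 - c*P*w1*w2 + c^3*w1^2
        - c^3*w1*w2) + w2^2) * hP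

theorem sum_choose0 (k N : ℕ) : ∑ n ∈ Finset.range N, (n.choose k : R) = (N.choose (k+1) : R) :=
  sum_tele (fun N => (N.choose (k+1) : R)) _ (by simp)
    (fun n => by rw [Nat.choose_succ_succ]; push_cast; ring) N

theorem sum_choose1 (k N : ℕ) : ∑ n ∈ Finset.range N, ((n:R)+1) * (n.choose k : R)
    = ((k:R)+1) * ((N+1).choose (k+2) : R) :=
  sum_tele (fun N => ((k:R)+1) * ((N+1).choose (k+2) : R)) _
    (by simp [Nat.choose_eq_zero_of_lt])
    (fun n => by
      rw [Nat.choose_succ_succ (n+1)]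
      have := congrArg (Nat.cast : ℕ → R) (Nat.add_one_mul_choose_eq n k)
      push_cast at this ⊢
      linear_combination -this) N

theorem sum_choose2 (k N : ℕ) : ∑ n ∈ Finset.range N, ((n:R)+1) * (1 + 4 * n) * (n.choose k : R)
    = ((k:R)+1) * (4 * ((k:R)+2) * ((N+2).choose (k+3) : R) - 7 * ((N+1).choose (k+2) : R)) :=
  sum_tele (fun N => ((k:R)+1) * (4 * ((k:R)+2) * ((N+2).choose (k+3) : R)
      - 7 * ((N+1).choose (k+2) : R))) _
    (by simp [Nat.choose_eq_zero_of_lt])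
    (fun n => by
      have h3 := congrArg (Nat.cast : ℕ → R) (Nat.choose_succ_succ (n+1) (k+1))
      rw [Nat.choose_succ_succ (n+1+1)]
      have h1 := congrArg (Nat.cast : ℕ → R) (Nat.add_one_mul_choose_eq n k)
      have h2 := congrArg (Nat.cast : ℕ → R) (Nat.add_one_mul_choose_eq (n+1) (k+1))
      simp only [Nat.succ_eq_add_one] at h3
      push_cast at h1 h2 h3 ⊢
      linear_combination (7 - 4*((n:R)+2)) * h1 - 4*((k:R)+1)*h2 - 7*((k:R)+1)*h3) N

theorem sum_bt (w : ℕ → R) (a : ℕ → R) (N : ℕ) :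
    ∑ n ∈ Finset.range N, w n * bt a n
      = ∑ k ∈ Finset.range N, (∑ n ∈ Finset.range N, w n * (n.choose k : R)) * a k := by
  simp only [Finset.sum_mul]
  rw [Finset.sum_comm]
  refine Finset.sum_congr rfl fun n hn => ?_
  rw [bt_ext a n N (by simpa using hn), Finset.mul_sum]
  exact Finset.sum_congr rfl fun k _ => by ring

end bt
section base
variable {R : Type*} [CommRing R]

theorem bt_dvd (P : R) (a : ℕ → R) (p j n : ℕ) (hn : n < p) (hj : j ≤ p)
    (h : ∀ k, j ≤ k → k < p → P ∣ a k) :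
    P ∣ bt a n - ∑ k ∈ Finset.range j, (n.choose k : R) * a k := by
  rw [bt_ext a n p hn, ← Finset.sum_range_add_sum_Ico _ hj, add_sub_cancel_left]
  refine Finset.dvd_sum fun k hk => ?_
  rw [Finset.mem_Ico] at hk
  exact (h k hk.1 hk.2).mul_left _

theorem mul_zero_of_dvd {P a b : R} (hP : P^2 = 0) (ha : P ∣ a) (hb : P ∣ b) : a * b = 0 := by
  obtain ⟨x, rfl⟩ := ha
  obtain ⟨y, rfl⟩ := hb
  linear_combination x * y * hP

theorem fermat (p q : ℕ) (hp : p.Prime) (hp2 : p ≠ 2) (hq : p = q + 1) (hP : (p:R)^2 = 0) :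
    (p:R) * (-2)^q = p := by
  have h : (-2:ℤ)^q ≡ 1 [ZMOD p] := by
    have := Int.ModEq.pow_card_sub_one_eq_one hp (n := -2) (by
      rw [IsCoprime.neg_left_iff]
      have : Nat.Coprime 2 p := (Nat.coprime_primes Nat.prime_two hp).2 (Ne.symm hp2)
      exact_mod_cast Nat.isCoprime_iff_coprime.2 this)
    simpa [hq] using this
  obtain ⟨w, hw⟩ := h.symm.dvd
  have := congrArg (Int.cast : ℤ → R) hw
  push_cast at this
  linear_combination p * this + w * hP

theorem dvd_cast {p m : ℕ} (h : p ∣ m) : (p:R) ∣ (m:R) := Nat.cast_dvd_cast h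

theorem dvd_c1 {p k : ℕ} (hp : p.Prime) (h1 : 2 ≤ k) (h2 : k < p) : p ∣ (p+1).choose k := by
  obtain ⟨j, rfl⟩ : ∃ j, k = j+1 := ⟨k-1, by omega⟩
  rw [Nat.choose_succ_succ]
  exact dvd_add (hp.dvd_choose_self (by omega) (by omega)) (hp.dvd_choose_self (by omega) h2)

theorem dvd_c2 {p k : ℕ} (hp : p.Prime) (h1 : 3 ≤ k) (h2 : k < p) : p ∣ (p+2).choose k := by
  obtain ⟨j, rfl⟩ : ∃ j, k = j+1 := ⟨k-1, by omega⟩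
  rw [Nat.choose_succ_succ]
  exact dvd_add (dvd_c1 hp (by omega) (by omega)) (dvd_c1 hp (by omega) h2)

theorem base0 (p : ℕ) (hp : p.Prime) (hp2 : p ≠ 2) (hP : (p:R)^2 = 0)
    (hu : ∀ k : ℕ, 0 < k → k < p → IsUnit (k:R)) (y : R) (a : ℕ → R) (a0 : a 0 = 1)
    (hrec : ∀ k : ℕ, ((k:R)+1)^2 * a (k+1) = 2 * (p*y - k) * (p*y+1+k) * a k) :
    JJ p a = p + 2*(p*y) ∧ 4 * SS p a = 2*p + 2*(p*y) := by
  have hval : ∀ k : ℕ, k + 1 < p → ((k:R)+1) * a (k+1) = -(p*y) * (-2)^(k+1) := by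
    intro k
    induction k with
    | zero =>
      intro _
      have := hrec 0
      rw [a0] at this
      push_cast at this ⊢
      linear_combination this + 2*y^2*hP
    | succ k ih =>
      intro hk
      have ih := ih (by omega)
      have h1 := hu (k+1) (by omega) (by omega)
      have h2 := hu (k+2) (by omega) (by omega)
      have := hrec (k+1)
      push_cast at h1 h2 this ⊢
      refine (h1.mul h2).mul_left_cancel ?_
      rw [pow_succ (-2:R) (k+1)]
      generalize (-2:R)^(k+1) = t at *
      linear_combination (k+1) * this + 2*(p*y - (k+1))*(p*y+1+(k+1))*ih
        - 2*y^2*t*(p*y+1)*hP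
  have hdv : ∀ k, 1 ≤ k → k < p → (p:R) ∣ a k := by
    intro k h1 h2
    obtain ⟨k, rfl⟩ : ∃ j, k = j+1 := ⟨k-1, by omega⟩
    have h := hval k h2
    have hk := hu (k+1) (by omega) h2
    push_cast at hk
    exact hk.dvd_mul_left.1 ⟨-y * (-2)^(k+1), by rw [h]; ring⟩
  have hsq : ∀ n, n < p → (bt a n)^2 = 2 * bt a n - 1 := by
    intro n hn
    have := bt_dvd (p:R) a p 1 n hn hp.one_lt.le hdv
    simp [a0] at this
    linear_combination mul_zero_of_dvd hP this this
  have hp3 : 3 ≤ p := by have := hp.two_le; omega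
  obtain ⟨q, hq⟩ : ∃ q, p = q+3 := ⟨p-3, by omega⟩
  have hqR : (p:R) = q + 3 := by rw [hq]; push_cast; ring
  have hF := fermat (R := R) p (q+2) hp hp2 (by omega) hP
  constructor
  · have e : JJ p a = 2 * (∑ n ∈ Finset.range p, 1 * bt a n) - p := by
      unfold JJ
      rw [Finset.sum_congr rfl (fun n hn => hsq n (by simpa using hn)), Finset.sum_sub_distrib,
        Finset.mul_sum]
      simp
    rw [e, sum_bt]
    simp only [one_mul, sum_choose0]
    have hr : Finset.range p = Finset.range (q+2+1) := by rw [hq]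
    rw [hr, Finset.sum_range_succ, Finset.sum_range_succ', Finset.sum_eq_zero]
    · rw [a0, show q+2+1 = p by omega]
      have h := hval (q+1) (by omega)
      have hd := hdv (q+2) (by omega) (by omega)
      obtain ⟨r, hr⟩ := hd
      rw [show q+1+1 = q+2 by omega] at h
      simp
      rw [hr] at h ⊢
      push_cast at h
      linear_combination -2*h - 2*r*p*hqR + 2*y*hF + 2*r*hP
    · intro k hk
      have hk : k < q+1 := by simpa using hk
      exact mul_zero_of_dvd hP (dvd_cast (hp.dvd_choose_self (by omega) (by omega)))
        (hdv _ (by omega) (by omega))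
  · have e : SS p a = 2 * (∑ n ∈ Finset.range p, ((n:R)+1) * bt a n) - (p+1).choose 2 := by
      unfold SS
      have := sum_choose1 (R := R) 0 p
      simp at this
      rw [← this, Finset.mul_sum, ← Finset.sum_sub_distrib]
      refine Finset.sum_congr rfl (fun n hn => ?_)
      rw [hsq n (by simpa using hn)]; ring
    rw [e, sum_bt]
    simp only [sum_choose1]
    have hr : Finset.range p = Finset.range (q+1+1+1) := by rw [hq]
    rw [hr, Finset.sum_range_succ, Finset.sum_range_succ, Finset.sum_range_succ', Finset.sum_eq_zero]
    · rw [a0]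
      have h := hval q (by omega)
      have hd := hdv (q+1) (by omega) (by omega)
      obtain ⟨r, hr⟩ := hd
      obtain ⟨r2, hr2⟩ := hdv (q+2) (by omega) (by omega)
      have hc : (p+1).choose (q+1+2) = p+1 := by
        rw [show q+1+2 = p by omega]; exact Nat.choose_succ_self_right p
      have hc2 : (2:R) * ((p+1).choose 2 : R) = p := by
        have h3 := Nat.add_one_mul_choose_eq p 1
        have := congrArg (Nat.cast : ℕ → R) h3
        simp only [Nat.choose_one_right, Nat.reduceAdd] at this
        push_cast at this
        linear_combination hP - this
      rw [show q+1+1 = q+2 by omega, hc, hr2]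
      rw [hr] at h ⊢
      rw [show q + 2 = (q+1)+1 by omega, pow_succ] at hF
      simp
      have hq' : (q:R) = p - 3 := by rw [hqR]; ring
      rw [hq'] at h ⊢
      generalize ((p+1).choose 2 : R) = C2 at *
      generalize (-2:R)^(q+1) = t at *
      grind
    · intro k hk
      have hk : k < q := by simpa using hk
      rw [mul_assoc]
      rw [mul_zero_of_dvd hP (dvd_cast (dvd_c1 hp (by omega) (by omega)))
        (hdv _ (by omega) (by omega)), mul_zero]


theorem base1 (p : ℕ) (hp : p.Prime) (hp5 : 5 ≤ p) (hP : (p:R)^2 = 0)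
    (hu : ∀ k : ℕ, 0 < k → k < p → IsUnit (k:R)) (y : R) (a : ℕ → R) (a0 : a 0 = 1)
    (hrec : ∀ k : ℕ, ((k:R)+1)^2 * a (k+1) = 2 * (1 + p*y - k) * (1+p*y+1+k) * a k) :
    12 * SS p a = 6 * (p + p*y) := by
  have ha1 : a 1 = 4 + 6 * (p*y) := by
    have := hrec 0
    rw [a0] at this
    push_cast at this
    simp at this
    linear_combination this + 2*y^2*hP
  have hval : ∀ k : ℕ, k + 2 < p →
      ((k:R)+2) * (k+1) * a (k+2) = (p*y) * (-2)^(k+2) * (k+3) := by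
    intro k
    induction k with
    | zero =>
      intro _
      have := hrec 1
      rw [ha1] at this
      have h2 := hu 2 (by omega) (by omega)
      refine h2.mul_left_cancel ?_
      push_cast at this ⊢
      simp at this ⊢
      norm_num at this ⊢
      grind
    | succ k ih =>
      intro hk
      have ih := ih (by omega)
      have h1 := hu (k+1) (by omega) (by omega)
      have h3 := hu (k+3) (by omega) (by omega)
      have := hrec (k+2)
      push_cast at h1 h3 this ⊢
      refine (h1.mul h3).mul_left_cancel ?_
      rw [show k + 1 + 2 = k + 2 + 1 by ring, pow_succ (-2:R) (k+2)]
      generalize (-2:R)^(k+2) = t at *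
      generalize a (k+2+1) = a' at *
      generalize a (k+2) = a'' at *
      linear_combination (k+1) * (k+2) * this + 2*(1 + p*y - (k+2))*(1+p*y+1+(k+2))*ih
        + 2*y^2*t*(p*y+3)*(k+3)*hP
  have hdv : ∀ k, 2 ≤ k → k < p → (p:R) ∣ a k := by
    intro k h1 h2
    obtain ⟨k, rfl⟩ : ∃ j, k = j+2 := ⟨k-2, by omega⟩
    have h := hval k h2
    have hk := hu (k+1) (by omega) (by omega)
    have hk2 := hu (k+2) (by omega) h2
    push_cast at hk hk2
    exact (hk2.mul hk).dvd_mul_left.1 ⟨y * (-2)^(k+2) * (k+3), by rw [h]; ring⟩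
  have hsq : ∀ n : ℕ, n < p → (bt a n)^2 = 2 * (1 + 4 * n) * bt a n - (1 + 4 * n)^2 := by
    intro n hn
    have := bt_dvd (p:R) a p 2 n hn hp.two_le hdv
    simp [a0, Finset.sum_range_succ, ha1] at this
    have this : (p:R) ∣ bt a n - (1 + 4 * n) := by
      have h := dvd_add this (Dvd.intro (6*y*n) rfl : (p:R) ∣ p * (6*y*n))
      convert h using 1; ring
    linear_combination mul_zero_of_dvd hP this this
  obtain ⟨q, hq⟩ : ∃ q, p = q+5 := ⟨p-5, by omega⟩
  have hqR : (q:R) = p - 5 := by rw [hq]; push_cast; ring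
  have hF := fermat (R := R) p (q+4) hp (by omega) (by omega) hP
  have e : SS p a = 2 * (∑ n ∈ Finset.range p, (((n:R)+1) * (1 + 4 * n)) * bt a n)
      - ∑ n ∈ Finset.range p, ((n:R)+1) * (1 + 4 * n)^2 := by
    unfold SS
    rw [Finset.mul_sum, ← Finset.sum_sub_distrib]
    refine Finset.sum_congr rfl (fun n hn => ?_)
    rw [hsq n (by simpa using hn)]; ring
  have s0 : (6:R) * (∑ n ∈ Finset.range p, ((n:R)+1) * (1 + 4 * (n:R))^2) = 3 * (p:R) := by
    rw [Finset.mul_sum, sum_tele (fun N : ℕ => 6*(N:R)+27*N*(N-1)+24*N*(N-1)*(2*N-1)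
      + 24*N^2*(N-1)^2) _ (by simp) (fun n => by push_cast; ring)]
    generalize (p:R) = P at *
    grind
  have s1 : 6 * ∑ n ∈ Finset.range p, ((n:R)+1) * (1 + 4 * n) * (n.choose 0 : R) = -5 * p := by
    rw [Finset.mul_sum, sum_tele (fun N : ℕ => 6*(N:R)+15*N*(N-1)+4*N*(N-1)*(2*N-1))
       _ (by simp) (fun n => by simp; ring)]
    generalize (p:R) = P at *
    grind
  have s2 : 6 * ∑ n ∈ Finset.range p, ((n:R)+1) * (1 + 4 * n) * (n.choose 1 : R) = 2 * p := by
    rw [Finset.mul_sum, sum_tele (fun N : ℕ => 3*(N:R)*(N-1)+5*N*(N-1)*(2*N-1)+6*N^2*(N-1)^2)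
       _ (by simp) (fun n => by simp; ring)]
    generalize (p:R) = P at *
    grind
  rw [sum_bt] at e
  have hr : Finset.range p = Finset.range (q+2+1+1+1) := by rw [hq]
  have e2 : ∑ k ∈ Finset.range p,
      (∑ n ∈ Finset.range p, ((n:R)+1) * (1 + 4 * n) * (n.choose k : R)) * a k
      = (∑ n ∈ Finset.range p, ((n:R)+1) * (1 + 4 * n) * (n.choose 0 : R))
      + (∑ n ∈ Finset.range p, ((n:R)+1) * (1 + 4 * n) * (n.choose 1 : R)) * a 1
      + 8 * a (q+2) + 7 * a (q+3) := by
    obtain ⟨r, hr1⟩ := hdv (q+2) (by omega) (by omega)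
    obtain ⟨r2, hr2⟩ := hdv (q+3) (by omega) (by omega)
    obtain ⟨r3, hr3⟩ := hdv (q+4) (by omega) (by omega)
    generalize hW : (fun k => (∑ n ∈ Finset.range p, ((n:R)+1) * (1 + 4 * n) * (n.choose k : R)))
      = W
    have hW' : ∀ k, (∑ n ∈ Finset.range p, ((n:R)+1) * (1 + 4 * n) * (n.choose k : R)) = W k :=
      fun k => congrFun hW k
    have hW2 : ∀ k, W k = _ := fun k => (hW' k).symm.trans (sum_choose2 k p)
    simp only [hW']
    rw [hr, Finset.sum_range_succ, Finset.sum_range_succ, Finset.sum_range_succ,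
      Finset.sum_range_succ', Finset.sum_range_succ', Finset.sum_eq_zero]
    · rw [hW2 (q+2), hW2 (q+2+1), hW2 (q+2+1+1), a0]
      have hc1 : (p+1).choose (q+2+1+2) = p+1 := by
        rw [show q+2+1+2 = p by omega]; exact Nat.choose_succ_self_right p
      have hc2 : (p+2).choose (q+2+1+3) = p+2 := by
        rw [show q+2+1+3 = p+1 by omega]; exact Nat.choose_succ_self_right (p+1)
      have hc3 : (2:R) * ((p+2).choose (q+2+3) : R) = 3 * p + 2 := by
        have h3 := Nat.add_one_mul_choose_eq (p+1) 1
        have h4 : (p+2).choose p = (p+2).choose 2 := Nat.choose_symm_of_eq_add (by omega)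
        rw [show q+2+3 = p by omega, h4]
        have := congrArg (Nat.cast : ℕ → R) h3
        simp only [Nat.choose_one_right, Nat.reduceAdd, show p+1+1 = p+2 by omega] at this
        push_cast at this
        linear_combination hP - this
      have hc4 : (p:R) ∣ ((p+1).choose (q+2+2) : R) := dvd_cast (dvd_c1 hp (by omega) (by omega))
      obtain ⟨u, hu4⟩ := hc4
      rw [hc1, hc2, hu4]
      rw [show q+2+1+1 = q+4 by omega, show q+2+1 = q+3 by omega]
      rw [hr1, hr2, hr3]
      push_cast
      rw [hqR]
      generalize ((p+2).choose (q+2+3) : R) = C2 at *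
      simp only [zero_add, mul_one]
      generalize W 0 = w0
      generalize W 1 = w1
      generalize hX : ((p + 2).choose (q + 4 + 3) : R) = X
      generalize ((p + 1).choose (q + 4 + 2) : R) = X2
      clear hu hrec hval hdv hsq e hF s0 s1 s2 hW2 hW' hr1 hr2 hr3
      generalize (p:R) = P at *
      linear_combination 4*P*r*hc3 + r*(12 + 4*(P-3)*C2 - 7*(P-2)*u)*hP
        + (r2*(-8-3*P+4*P^2) + r3*(4*X-7*X2+4*P*X))*hP
    · intro k hk
      have hk : k < q := by simpa using hk
      rw [hW2]
      have h1 : (p:R) ∣ ((p+2).choose (k+1+1+3) : R) := dvd_cast (dvd_c2 hp (by omega) (by omega))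
      have h2 : (p:R) ∣ ((p+1).choose (k+1+1+2) : R) := dvd_cast (dvd_c1 hp (by omega) (by omega))
      exact mul_zero_of_dvd hP ((dvd_sub (h1.mul_left _) (h2.mul_left _)).mul_left _)
        (hdv _ (by omega) (by omega))
  rw [e2] at e
  have v1 := hval q (by omega)
  have v2 := hval (q+1) (by omega)
  obtain ⟨r, hr1⟩ := hdv (q+2) (by omega) (by omega)
  obtain ⟨r2, hr2⟩ := hdv (q+3) (by omega) (by omega)
  rw [show q + 1 + 2 = q + 3 by omega, pow_succ (-2:R) (q+2)] at v2
  rw [pow_succ (-2:R) (q+3), pow_succ (-2:R) (q+2)] at hF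
  push_cast at v1 v2
  rw [hqR] at v1 v2
  rw [e, ha1]
  rw [hr1] at v1 ⊢
  rw [hr2] at v2 ⊢
  clear hu hrec hval hdv hsq e e2 hr1 hr2
  generalize (-2:R)^(q+2) = t at *
  generalize (p:R) = P at *
  generalize ∑ n ∈ Finset.range p, ((n:R)+1) * (1 + 4 * n)^2 = A at *
  generalize ∑ n ∈ Finset.range p, ((n:R)+1) * (1 + 4 * n) * (n.choose 0 : R) = B at *
  generalize ∑ n ∈ Finset.range p, ((n:R)+1) * (1 + 4 * n) * (n.choose 1 : R) = C at *
  clear hqR hr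
  have w1 : 24 * (P * r) = - (P * y) := by grind
  have w2 : 12 * (P * r2) = P * y := by grind
  linear_combination 8 * w1 + 14 * w2 - 2 * s0 + 4 * s1 + (16 + 24 * P * y) * s2 + 48*y*hP

end base
section dom
variable {D : Type*} [CommRing D] [IsDomain D] [CharZero D]

theorem seq_hA (x : D) (A B : ℕ → D) (h0 : A 0 = B 0)
    (hA : ∀ k : ℕ, ((k:D)+1)^2 * A (k+1) = 2 * (x - k) * (x+1+k) * A k)
    (hB : ∀ k : ℕ, ((k:D)+1)^2 * B (k+1) = 2 * (x+1 - k) * (x+1+1+k) * B k) (k : ℕ) :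
    (x + 1 - k) * B k = (x + 1 + k) * A k := by
  induction k with
  | zero => simp [h0]
  | succ k ih =>
    have hk : ((k:D)+1)^2 ≠ 0 := pow_ne_zero _ (by exact_mod_cast k.succ_ne_zero)
    refine mul_left_cancel₀ hk ?_
    push_cast
    linear_combination (x-k) * hB k - (x+2+k) * hA k + 2*(x-k)*(x+2+k)*ih

theorem seq_hD (x : D) (A B : ℕ → D) (h0 : A 0 = B 0)
    (hA : ∀ k : ℕ, ((k:D)+1)^2 * A (k+1) = 2 * (x - k) * (x+1+k) * A k)
    (hB : ∀ k : ℕ, ((k:D)+1)^2 * B (k+1) = 2 * (x+1 - k) * (x+1+1+k) * B k) (k : ℕ) :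
    ((k:D)+1) * (B (k+1) - A (k+1)) = 4 * (x + 1 + k) * A k := by
  have hk : ((k:D)+1) ≠ 0 := by exact_mod_cast k.succ_ne_zero
  refine mul_left_cancel₀ hk ?_
  linear_combination hB k - hA k + 2*(x+2+k)*seq_hA x A B h0 hA hB k

theorem seq_uniq (x : D) (A B : ℕ → D) (h0 : A 0 = B 0)
    (hA : ∀ k : ℕ, ((k:D)+1)^2 * A (k+1) = 2 * (x - k) * (x+1+k) * A k)
    (hB : ∀ k : ℕ, ((k:D)+1)^2 * B (k+1) = 2 * (x - k) * (x+1+k) * B k) : A = B := by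
  funext k
  induction k with
  | zero => exact h0
  | succ k ih =>
    have hk : ((k:D)+1)^2 ≠ 0 := pow_ne_zero _ (by exact_mod_cast k.succ_ne_zero)
    refine mul_left_cancel₀ hk ?_
    rw [hA, hB, ih]
end dom

section pad
variable {p : ℕ} [Fact p.Prime]

theorem coe_two : ((2:ℤ_[p]):ℚ_[p]) = 2 := map_ofNat (PadicInt.Coe.ringHom (p := p)) 2

theorem gbinom_coe (x : ℤ_[p]) (k : ℕ) : gbinom (x : ℚ_[p]) k = ((Ring.choose x k : ℤ_[p]) : ℚ_[p]) := by
  have h := Ring.descPochhammer_eq_factorial_smul_choose x k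
  have h2 : (descPochhammer ℤ k).smeval x = ∏ i ∈ Finset.range k, (x - i) := by
    rw [← descPochhammer_eval_eq_prod_range, Polynomial.eval_eq_smeval,
      ← descPochhammer_map (Int.castRingHom ℤ_[p]), ← Polynomial.eval_eq_smeval, Polynomial.eval_map,
      ← Polynomial.aeval_eq_smeval]
    rfl
  rw [h2, nsmul_eq_mul] at h
  have h3 := congrArg (fun z : ℤ_[p] => (z : ℚ_[p])) h
  simp only [PadicInt.coe_mul, PadicInt.coe_natCast] at h3
  unfold gbinom
  rw [div_eq_iff (by exact_mod_cast k.factorial_ne_zero), mul_comm, ← h3]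
  have := map_prod (PadicInt.Coe.ringHom (p := p)) (fun i : ℕ => x - (i:ℤ_[p])) (Finset.range k)
  exact this.symm

noncomputable def al (x : ℤ_[p]) (k : ℕ) : ℤ_[p] :=
  Ring.choose x k * Ring.choose (x + k) k * 2^k

theorem al_coe (x : ℤ_[p]) (k : ℕ) :
    ((al x k : ℤ_[p]) : ℚ_[p]) = gbinom (x:ℚ_[p]) k * gbinom ((x:ℚ_[p]) + (k:ℚ_[p])) k * 2^k := by
  unfold al
  rw [gbinom_coe, show ((x:ℚ_[p]) + (k:ℚ_[p])) = ((x + k : ℤ_[p]) : ℚ_[p]) by push_cast; rfl, gbinom_coe]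
  simp [coe_two]

theorem gbinom_add (x : ℚ_[p]) (k : ℕ) :
    gbinom (x + (k:ℚ_[p])) k = (∏ i ∈ Finset.range k, (x + 1 + i)) / (k.factorial : ℚ_[p]) := by
  unfold gbinom
  congr 1
  rw [← Finset.prod_range_reflect]
  refine Finset.prod_congr rfl fun i hi => ?_
  have hi := Finset.mem_range.1 hi
  rw [Nat.cast_sub (by omega), Nat.cast_sub (by omega)]
  push_cast; ring

theorem al_zero (x : ℤ_[p]) : al x 0 = 1 := by simp [al]

theorem al_succ (x : ℤ_[p]) (k : ℕ) :
    ((k:ℤ_[p])+1)^2 * al x (k+1) = 2 * (x - k) * (x+1+k) * al x k := by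
  apply Subtype.coe_injective
  push_cast
  rw [coe_two, al_coe, al_coe, gbinom_add, gbinom_add]
  unfold gbinom
  rw [Finset.prod_range_succ, Finset.prod_range_succ, Nat.factorial_succ]
  have h1 : (k.factorial : ℚ_[p]) ≠ 0 := by exact_mod_cast k.factorial_ne_zero
  have h2 : (k:ℚ_[p]) + 1 ≠ 0 := by exact_mod_cast k.succ_ne_zero
  push_cast
  generalize ∏ i ∈ Finset.range k, ((x:ℚ_[p]) - (i:ℚ_[p])) = u
  generalize ∏ i ∈ Finset.range k, ((x:ℚ_[p]) + 1 + (i:ℚ_[p])) = v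
  field_simp
  try ring

theorem al_symm (x : ℤ_[p]) : al (-1 - x) = al x := by
  refine seq_uniq x _ _ (by rw [al_zero, al_zero]) (fun k => ?_) (al_succ x)
  rw [al_succ]; ring

theorem tseq_coe (x : ℤ_[p]) (n : ℕ) : tseq (x : ℚ_[p]) n = ((bt (al x) n : ℤ_[p]) : ℚ_[p]) := by
  unfold tseq bt
  have := map_sum (PadicInt.Coe.ringHom (p := p)) (fun k : ℕ => (n.choose k : ℤ_[p]) * al x k)
    (Finset.range (n+1))
  simp only [map_mul, map_natCast] at this
  refine Eq.trans ?_ this.symm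
  refine Finset.sum_congr rfl fun k _ => ?_
  rw [show PadicInt.Coe.ringHom (al x k) = ((al x k : ℤ_[p]) : ℚ_[p]) from rfl, al_coe]; ring

theorem map_bt {R S : Type*} [CommRing R] [CommRing S] (f : R →+* S) (a : ℕ → R) (n : ℕ) :
    bt (fun k => f (a k)) n = f (bt a n) := by
  simp [bt]

theorem map_SS {R S : Type*} [CommRing R] [CommRing S] (f : R →+* S) (a : ℕ → R) (n : ℕ) :
    SS n (fun k => f (a k)) = f (SS n a) := by
  simp [SS, map_bt]

/-- The sequence modulo `p^2`. -/
noncomputable def ar (x : ℤ_[p]) (k : ℕ) : ZMod (p^2) := PadicInt.toZModPow 2 (al x k)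

local notation "φ" => (PadicInt.toZModPow 2 : ℤ_[p] →+* ZMod (p^2))

theorem hPP (p : ℕ) : ((p:ℕ) : ZMod (p^2))^2 = 0 := by
  exact_mod_cast ZMod.natCast_self (p^2)

theorem unit_lt (k : ℕ) (h0 : 0 < k) (h : k < p) : IsUnit (k : ZMod (p^2)) := by
  rw [ZMod.isUnit_iff_coprime]
  exact Nat.Coprime.pow_right 2 (Nat.coprime_of_lt_prime h0.ne' h Fact.out).symm

theorem unit_add {u y : ZMod (p^2)} (hu : IsUnit u) : IsUnit (u + (p : ZMod (p^2)) * y) := by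
  have hn : IsNilpotent ((p : ZMod (p^2)) * y) := ⟨2, by rw [mul_pow, hPP p, zero_mul]⟩
  exact hn.isUnit_add_left_of_commute hu (Commute.all _ _)

theorem phi_two : φ 2 = 2 := map_ofNat φ 2
theorem phi_four : φ 4 = 4 := map_ofNat φ 4

theorem ar_succ (x : ℤ_[p]) (k : ℕ) :
    ((k:ZMod (p^2))+1)^2 * ar x (k+1) = 2 * (φ x - k) * (φ x+1+k) * ar x k := by
  have := congrArg φ (al_succ x k)
  simpa [ar, phi_two, phi_four] using this

theorem ar_zero (x : ℤ_[p]) : ar x 0 = 1 := by simp [ar, al_zero]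

theorem step_ar (x : ℤ_[p]) (hc : IsUnit (φ x + 1)) :
    4*(φ x + 1)*((2*(φ x + 1)+1)*JJ p (ar (x+1))+(2*(φ x + 1)-1)*JJ p (ar x))=0 ∧
    8*(φ x + 1)*((φ x + 1)^2-1)*(2*(SS p (ar (x+1))-SS p (ar x))
      +((φ x + 1)^2-1)*(JJ p (ar (x+1))-JJ p (ar x)))=0 := by
  refine step_s15 p (Nat.Prime.pos Fact.out) (hPP p) (φ x + 1) hc (ar x) (ar (x+1))
    (by rw [ar_zero, ar_zero]) (fun k => ?_) (fun k => ?_)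
  · have := congrArg φ (seq_hA x (al x) (al (x+1)) (by rw [al_zero, al_zero]) (al_succ x)
      (al_succ (x+1)) k)
    simpa [ar, phi_two, phi_four] using this
  · have := congrArg φ (seq_hD x (al x) (al (x+1)) (by rw [al_zero, al_zero]) (al_succ x)
      (al_succ (x+1)) k)
    simpa [ar, phi_two, phi_four] using this

theorem unit_form (m : ℕ) (y : ZMod (p^2)) (h0 : 0 < m) (h : m < p) {u : ZMod (p^2)}
    (hu : u = (m : ZMod (p^2)) + (p : ZMod (p^2)) * y) : IsUnit u := by
  rw [hu]; exact unit_add (unit_lt m h0 h)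

/-- The claim for `x = m + p y`. -/
def Claim (x : ℤ_[p]) (m : ℕ) (z : ZMod (p^2)) : Prop :=
  (2 * φ x + 1) * JJ p (ar x) = (-1)^m * ((p : ZMod (p^2)) + 2 * z) ∧
  4 * (2 * φ x + 1) * SS p (ar x)
    = (p : ZMod (p^2)) * (2 * φ x + 1) - (-1)^m * (2 * φ x^2 + 2 * φ x - 1) * ((p : ZMod (p^2)) + 2*z)

theorem claim_zero (hp2 : p ≠ 2) (y : ℤ_[p]) : Claim ((p:ℤ_[p]) * y) 0 ((p : ZMod (p^2)) * φ y) := by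
  have hX : φ ((p:ℤ_[p]) * y) = (p : ZMod (p^2)) * φ y := by simp
  have hP := hPP p
  obtain ⟨h1, h2⟩ := base0 p Fact.out hp2 hP unit_lt (φ y) (ar ((p:ℤ_[p])*y)) (ar_zero _)
    (fun k => by rw [ar_succ, hX])
  unfold Claim
  rw [hX]
  generalize JJ p (ar ((p:ℤ_[p])*y)) = J at *
  generalize SS p (ar ((p:ℤ_[p])*y)) = S at *
  generalize (p : ZMod (p^2)) = P at *
  generalize φ y = Y at *
  constructor
  · linear_combination (2*P*Y+1)*h1 + (2*Y + 4*Y^2)*hP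
  · grind

theorem claim_J (x : ℤ_[p]) (m : ℕ) (z : ZMod (p^2)) (h : Claim x m z)
    (hc : IsUnit (φ x + 1)) (h2 : IsUnit (2 : ZMod (p^2))) :
    (2 * φ (x+1) + 1) * JJ p (ar (x+1)) = (-1)^(m+1) * ((p : ZMod (p^2)) + 2 * z) := by
  have h1 := (step_ar x hc).1
  have h4 : IsUnit (4 * (φ x + 1)) := by
    have := (h2.mul h2).mul hc
    convert this using 1
    ring
  have h5 := (h4.mul_right_eq_zero).1 h1
  have h6 := h.1
  rw [map_add, map_one, pow_succ (-1 : ZMod (p^2)) m]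
  linear_combination h5 - h6

theorem claim_one (hp5 : 5 ≤ p) (y : ℤ_[p]) : Claim ((p:ℤ_[p]) * y + 1) 1 ((p : ZMod (p^2)) * φ y) := by
  have hX : φ ((p:ℤ_[p]) * y) = (p : ZMod (p^2)) * φ y := by simp
  have hX1 : φ ((p:ℤ_[p]) * y + 1) = 1 + (p : ZMod (p^2)) * φ y := by simp [add_comm]
  have hP := hPP p
  have h2 : IsUnit (2 : ZMod (p^2)) := by exact_mod_cast unit_lt (p := p) 2 (by omega) (by omega)
  have h3 : IsUnit (3 : ZMod (p^2)) := by exact_mod_cast unit_lt (p := p) 3 (by omega) (by omega)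
  have hJ := claim_J _ _ _ (claim_zero (by omega) y)
    (unit_form 1 (φ y) (by omega) (by omega) (by rw [hX]; push_cast; ring)) h2
  have hS := base1 p Fact.out hp5 hP unit_lt (φ y) (ar ((p:ℤ_[p])*y+1)) (ar_zero _)
    (fun k => by rw [ar_succ, hX1])
  refine ⟨hJ, ?_⟩
  clear hJ
  rw [hX1]
  generalize SS p (ar ((p:ℤ_[p])*y+1)) = S at *
  refine h3.mul_left_cancel ?_
  clear h3 h2 hX hX1
  generalize (p : ZMod (p^2)) = P at *
  generalize φ y = Y at *
  grind

theorem claim_succ (x : ℤ_[p]) (m : ℕ) (z : ZMod (p^2)) (h : Claim x m z)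
    (h2 : IsUnit (2 : ZMod (p^2)))
    (hc : IsUnit (φ x + 1)) (hc0 : IsUnit (φ x)) (hc2 : IsUnit (φ x + 2))
    (hd : IsUnit (2 * φ x + 1)) : Claim (x+1) (m+1) z := by
  have hJ := claim_J x m z h hc h2
  refine ⟨hJ, ?_⟩
  have h1 := (step_ar x hc).2
  have hu : IsUnit (8*(φ x + 1)*((φ x + 1)^2-1)) := by
    have := (((h2.mul h2).mul h2).mul hc).mul (hc0.mul hc2)
    convert this using 1
    ring
  have h5 := (hu.mul_right_eq_zero).1 h1
  obtain ⟨h6, h7⟩ := h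
  rw [map_add, map_one, pow_succ (-1 : ZMod (p^2)) m] at *
  refine hd.mul_left_cancel ?_
  generalize JJ p (ar x) = J at *
  generalize SS p (ar x) = S at *
  generalize JJ p (ar (x+1)) = J' at *
  generalize SS p (ar (x+1)) = S' at *
  generalize (p : ZMod (p^2)) = P at *
  generalize φ x = X at *
  generalize (-1 : ZMod (p^2))^m = e at *
  linear_combination 2*(2*X+3)*(2*X+1)*h5 + (2*X+3)*h7 - 2*((X+1)^2-1)*(2*X+1)*hJ
    + 2*((X+1)^2-1)*(2*X+3)*h6

theorem claim_all (hp2 : p ≠ 2) (y : ℤ_[p]) (m : ℕ) (hm : 2 * m + 1 < p) :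
    Claim ((p:ℤ_[p]) * y + (m:ℤ_[p])) m ((p : ZMod (p^2)) * φ y) := by
  induction m with
  | zero => simpa using claim_zero hp2 y
  | succ m ih =>
    have ih := ih (by omega)
    rcases Nat.eq_zero_or_pos m with rfl | hm0
    · simpa using claim_one (by
        rcases Nat.Prime.eq_two_or_odd (Fact.out : p.Prime) with h | h <;> omega) y
    · have hX : φ ((p:ℤ_[p]) * y + (m:ℤ_[p])) = (m : ZMod (p^2)) + (p : ZMod (p^2)) * φ y := by simp [add_comm]
      have h2 : IsUnit (2 : ZMod (p^2)) := by
        exact_mod_cast unit_lt (p := p) 2 (by omega) (by omega)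
      have := claim_succ _ _ _ ih h2
        (unit_form (m+1) (φ y) (by omega) (by omega) (by rw [hX]; push_cast; ring))
        (unit_form m (φ y) (by omega) (by omega) hX)
        (unit_form (m+2) (φ y) (by omega) (by omega) (by rw [hX]; push_cast; ring))
        (unit_form (2*m+1) (2 * φ y) (by omega) (by omega) (by rw [hX]; push_cast; ring))
      rw [add_assoc] at this
      exact_mod_cast this

theorem final_R (hp2 : p ≠ 2) (x y : ℤ_[p]) (m : ℕ) (hm : m < p) (hx : x = (p:ℤ_[p]) * y + (m:ℤ_[p]))
    (h : 2 * m + 1 ≠ p) :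
    φ (4 * (2*x+1) * SS p (al x)) =
      φ ((p:ℤ_[p]) * (2*x+1) - (-1)^m * (2*x^2+2*x-1) * ((p:ℤ_[p]) + 2*((p:ℤ_[p])*y))) := by
  have hS : φ (SS p (al x)) = SS p (ar x) := (map_SS φ (al x) p).symm
  rcases lt_or_gt_of_ne h with h | h
  · have := (claim_all hp2 y m h).2
    rw [← hx, ← hS] at this
    simpa [phi_two, phi_four] using this
  · have hodd : p % 2 = 1 := by
      rcases Nat.Prime.eq_two_or_odd (Fact.out : p.Prime) with h | h <;> omega
    have h1 := (claim_all hp2 (-y-1) (p-1-m) (by omega)).2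
    have hx' : (p:ℤ_[p]) * (-y-1) + ((p-1-m : ℕ) : ℤ_[p]) = -1 - x := by
      rw [Nat.cast_sub (by omega), Nat.cast_sub (by omega), hx]; push_cast; ring
    have hsg : (-1 : ZMod (p^2))^(p-1-m) = (-1)^m := by
      rcases Nat.even_or_odd m with he | he
      · rw [he.neg_one_pow, Even.neg_one_pow]
        rw [Nat.even_iff] at he ⊢; omega
      · rw [he.neg_one_pow, Odd.neg_one_pow]
        rw [Nat.odd_iff] at he ⊢; omega
    have har : ar (-1 - x) = ar x := by
      funext k; unfold ar; rw [al_symm]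
    rw [hx', hsg, har, ← hS] at h1
    simp only [map_add, map_sub, map_mul, map_pow, map_neg, map_one, map_natCast, phi_two,
      phi_four] at h1 ⊢
    linear_combination -h1

end pad

theorem stmt_15 (p : ℕ) [Fact p.Prime] (hp : p ≠ 2) (x : ℚ_[p]) (hx : ‖x‖ ≤ 1)
    (m : ℕ) (hm : m < p) (hxm : ‖x - m‖ ≤ (p : ℝ)⁻¹)
    (h2x : ¬ ‖2*x + 1‖ ≤ (p : ℝ)⁻¹) :
    ‖(∑ n ∈ Finset.range p, ((n : ℚ_[p]) + 1) * (tseq x n)^2) -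
        ((p : ℚ_[p])/4 - (-1)^m * (2*x^2 + 2*x - 1) * ((p : ℚ_[p]) + 2*(x - m)) / (8*x + 4))‖
      ≤ (p : ℝ) ^ (-2 : ℤ) := by
  obtain ⟨X, rfl⟩ : ∃ X : ℤ_[p], (X : ℚ_[p]) = x := ⟨⟨x, hx⟩, rfl⟩
  have key : ∀ w : ℤ_[p], ‖w‖ ≤ (p:ℝ)⁻¹ ↔ (p : ℤ_[p]) ∣ w := by
    intro w
    have := PadicInt.norm_le_pow_iff_mem_span_pow w 1
    rw [Ideal.mem_span_singleton] at this
    simpa using this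
  have hd : (p : ℤ_[p]) ∣ X - m := by
    rw [← key, PadicInt.norm_def]; push_cast; exact hxm
  obtain ⟨y, hy⟩ := hd
  have hXy : X = p * y + m := by linear_combination hy
  have hnd : ¬ (p : ℤ_[p]) ∣ 2 * X + 1 := by
    rw [← key, PadicInt.norm_def]; push_cast; rw [coe_two]; exact h2x
  have hne : 2 * m + 1 ≠ p := by
    intro h
    refine hnd ⟨2 * y + 1, ?_⟩
    have : (2 * (m:ℤ_[p]) + 1) = p := by exact_mod_cast congrArg (Nat.cast : ℕ → ℤ_[p]) h
    rw [hXy]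
    linear_combination this
  have hF := final_R hp X y m hm hXy hne
  rw [← sub_eq_zero, ← map_sub, ← RingHom.mem_ker, PadicInt.ker_toZModPow,
    ← PadicInt.norm_le_pow_iff_mem_span_pow] at hF
  have hn1 : ‖2 * X + 1‖ = 1 := by
    by_contra hcon
    have h1 : ‖2 * X + 1‖ < 1 := lt_of_le_of_ne (PadicInt.norm_le_one _) hcon
    exact hnd ((PadicInt.norm_lt_one_iff_dvd _).1 h1)
  have hn4 : ‖(4 : ℤ_[p])‖ = 1 := by
    have h2 : ‖((2:ℕ) : ℤ_[p])‖ = 1 := by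
      by_contra hcon
      have h1 : ‖((2:ℕ) : ℤ_[p])‖ < 1 := lt_of_le_of_ne (PadicInt.norm_le_one _) hcon
      have h3 : p ∣ 2 := by
        have := (PadicInt.norm_int_lt_one_iff_dvd (p := p) 2).1 (by simpa using h1)
        exact_mod_cast this
      exact hp ((Nat.prime_dvd_prime_iff_eq Fact.out Nat.prime_two).1 h3)
    have : (4 : ℤ_[p]) = ((2:ℕ) : ℤ_[p]) * ((2:ℕ) : ℤ_[p]) := by norm_num
    rw [this, norm_mul, h2, one_mul]
  have hu : ‖(4 * (2 * X + 1) : ℤ_[p])‖ = 1 := by rw [norm_mul, hn4, hn1, one_mul]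
  have hSc : (∑ n ∈ Finset.range p, ((n : ℚ_[p]) + 1) * (tseq (X:ℚ_[p]) n)^2)
      = ((SS p (al X) : ℤ_[p]) : ℚ_[p]) := by
    unfold SS
    rw [show ((∑ n ∈ Finset.range p, ((n:ℤ_[p])+1) * (bt (al X) n)^2 : ℤ_[p]) : ℚ_[p])
      = PadicInt.Coe.ringHom (∑ n ∈ Finset.range p, ((n:ℤ_[p])+1) * (bt (al X) n)^2) from rfl]
    rw [map_sum]
    refine Finset.sum_congr rfl fun n _ => ?_
    rw [tseq_coe]
    simp only [map_mul, map_add, map_natCast, map_one, map_pow]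
    rfl
  have c4 : ((4:ℤ_[p]):ℚ_[p]) = 4 := map_ofNat (PadicInt.Coe.ringHom (p := p)) 4
  rw [hSc]
  have hu' : ‖(4 * (2 * (X:ℚ_[p]) + 1))‖ = 1 := by
    rw [PadicInt.norm_def] at hu; push_cast at hu; rw [coe_two, c4] at hu; exact hu
  have hne0 : (2 * (X:ℚ_[p]) + 1) ≠ 0 := by
    intro h; rw [h] at hu'; simp at hu'
  rw [PadicInt.norm_def] at hF
  push_cast at hF
  rw [coe_two, c4] at hF
  have hyc : (p:ℚ_[p]) * (y:ℚ_[p]) = (X:ℚ_[p]) - m := by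
    have := congrArg (fun w : ℤ_[p] => (w : ℚ_[p])) hy
    push_cast at this
    exact this.symm
  rw [hyc] at hF
  have h84 : 8 * (X:ℚ_[p]) + 4 ≠ 0 := by
    rw [show 8 * (X:ℚ_[p]) + 4 = 4 * (2 * X + 1) by ring]
    exact mul_ne_zero (by norm_num) hne0
  generalize ((SS p (al X) : ℤ_[p]) : ℚ_[p]) = S at *
  generalize (X : ℚ_[p]) = x at *
  have hmul : ∀ w : ℚ_[p], ‖w‖ = ‖4 * (2 * x + 1) * w‖ := by
    intro w
    rw [norm_mul, hu', one_mul]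
  rw [hmul]
  refine le_trans (le_of_eq ?_) hF
  congr 1
  rw [show 8 * x + 4 = 4 * (2 * x + 1) by ring]
  field_simp
end
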